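/- arXiv:math/0701030 — 5 statements merged into one kernel-verified Lean document; each statement's English description precedes it below -/
import Mathlib

section
/- Let X be an infinite set. Every symmetric precomplete clone on X contains all permutations of X. -/
universe u v

open Cardinal

/-- The set of all finitary operations on `X`: an `n`-th component element is an
operation of arity `n + 1` (so all arities are `≥ 1`). -/
abbrev Ops (X : Type u) : Type u := Σ n : ℕ, ((Fin (n + 1) → X) → X)

/-- A clone: contains all projections and is closed under composition. -/
def IsClone {X : Type u} (C : Set (Ops X)) : Prop :=
  (∀ (n : ℕ) (k : Fin (n + 1)), (⟨n, fun x => x k⟩ : Ops X) ∈ C) ∧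
  ∀ (n m : ℕ) (f : (Fin (n + 1) → X) → X), (⟨n, f⟩ : Ops X) ∈ C →
    ∀ g : Fin (n + 1) → ((Fin (m + 1) → X) → X), (∀ i, (⟨m, g i⟩ : Ops X) ∈ C) →
      (⟨m, fun x => f fun i => g i x⟩ : Ops X) ∈ C

/-- The clone generated by a set of operations. -/
def cloneGen {X : Type u} (F : Set (Ops X)) : Set (Ops X) :=
  ⋂₀ {C : Set (Ops X) | IsClone C ∧ F ⊆ C}

/-- A precomplete (maximal) clone. -/
def IsPrecompleteClone {X : Type u} (C : Set (Ops X)) : Prop :=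
  IsClone C ∧ C ≠ Set.univ ∧ ∀ f : Ops X, f ∉ C → cloneGen (insert f C) = Set.univ

/-- A unary function, viewed as a unary operation in `Ops X`. -/
def unaryOp {X : Type u} (F : X → X) : Ops X := ⟨0, fun x => F (x 0)⟩

/-- The polymorphism clone of a set of binary operations. -/
def Pol2 {X : Type u} (H : Set (X → X → X)) : Set (Ops X) :=
  {f : Ops X | ∀ g : Fin (f.1 + 1) → (X → X → X), (∀ i, g i ∈ H) →
    (fun x y => f.2 fun i => g i x y) ∈ H}

/-- The conjugate of an operation by a permutation `γ`:
`(x₁,…,xₙ) ↦ γ⁻¹ (f (γ x₁, …, γ xₙ))`. -/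
def conjOp {X : Type u} (γ : Equiv.Perm X) (f : Ops X) : Ops X :=
  ⟨f.1, fun x => γ.symm (f.2 fun i => γ (x i))⟩

/-- A clone is symmetric iff it is invariant under conjugation by all permutations. -/
def IsSymmetricClone {X : Type u} (C : Set (Ops X)) : Prop :=
  ∀ γ : Equiv.Perm X, conjOp γ '' C = C

inductive GenC {X : Type u} (C : Set (Ops X)) (S : Set X) (n : ℕ) :
    ((Fin (n + 1) → X) → X) → Prop
  | base (γ : Equiv.Perm X) (k : Fin (n + 1)) (hγ : ∀ x ∈ S, γ x = x) :
      GenC C S n (fun x => γ (x k))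
  | step (m : ℕ) (t : (Fin (m + 1) → X) → X) (ht : (⟨m, t⟩ : Ops X) ∈ C)
      (g : Fin (m + 1) → ((Fin (n + 1) → X) → X)) (hg : ∀ i, GenC C S n (g i)) :
      GenC C S n (fun x => t (fun i => g i x))

theorem conj_mem {X : Type u} {C : Set (Ops X)} (hsym : IsSymmetricClone C)
    (γ : Equiv.Perm X) {m : ℕ} {t : (Fin (m + 1) → X) → X} (ht : (⟨m, t⟩ : Ops X) ∈ C) :
    (⟨m, fun x => γ (t (fun i => γ.symm (x i)))⟩ : Ops X) ∈ C := by
  rw [← hsym γ.symm]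
  exact ⟨_, ht, rfl⟩

theorem genC_post {X : Type u} {C : Set (Ops X)} (hsym : IsSymmetricClone C) {S : Set X}
    {n : ℕ} (γ : Equiv.Perm X) (hγ : ∀ x ∈ S, γ x = x)
    {f : (Fin (n + 1) → X) → X} (hf : GenC C S n f) : GenC C S n (fun x => γ (f x)) := by
  induction hf with
  | base γ' k h' =>
    exact GenC.base (γ * γ') k (fun x hx => by simp [h' x hx, hγ x hx])
  | step m t ht g hg ih =>
    have := GenC.step m _ (conj_mem hsym γ ht) (fun i x => γ (g i x)) ih
    simpa using this

theorem genC_all {X : Type u} {C : Set (Ops X)} (hsym : IsSymmetricClone C)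
    (hpre : IsPrecompleteClone C) {S : Set X} (α : Equiv.Perm X) (hα : ∀ x ∈ S, α x = x)
    (hn : unaryOp ⇑α ∉ C) {n : ℕ} (f : (Fin (n + 1) → X) → X) : GenC C S n f := by
  have hbase : ∀ (n : ℕ) (k : Fin (n + 1)), GenC C S n (fun x => x k) := fun n k =>
    GenC.base 1 k (fun x _ => rfl)
  have hcl : IsClone {f : Ops X | GenC C S f.1 f.2} := by
    refine ⟨fun n k => hbase n k, fun n m f hf g hg => ?_⟩
    change GenC C S n f at hf
    change ∀ i, GenC C S m (g i) at hg
    change GenC C S m _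
    induction hf with
    | base γ k h => exact genC_post hsym γ h (hg k)
    | step l t ht s hs ih => exact GenC.step l t ht (fun i x => s i (fun j => g j x)) ih
  have hu := hpre.2.2 _ hn
  have : (⟨n, f⟩ : Ops X) ∈ cloneGen (insert (unaryOp ⇑α) C) := by rw [hu]; trivial
  refine this _ ⟨hcl, ?_⟩
  rintro ⟨m, t⟩ (h | h)
  · rw [h]; exact GenC.base α 0 hα
  · exact GenC.step m t h (fun i x => x i) (fun i => hbase m i)

theorem genC_ext {X : Type u} {C : Set (Ops X)} (hC : IsClone C) {S : Set X}
    {n : ℕ} {f : (Fin (n + 1) → X) → X} (hf : GenC C S n f) :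
    ∃ t, (⟨n, t⟩ : Ops X) ∈ C ∧ ∀ x, (∀ i, x i ∈ S) → t x = f x := by
  induction hf with
  | base γ k h => exact ⟨fun x => x k, hC.1 n k, fun x hx => (h _ (hx k)).symm⟩
  | step m t ht g hg ih =>
    choose s hs hs' using ih
    refine ⟨_, hC.2 m n t ht s hs, fun x hx => ?_⟩
    simp only [fun i => hs' i x hx]

theorem genC_comp {X : Type u} {C : Set (Ops X)} (hsym : IsSymmetricClone C)
    (hC : IsClone C) {S : Set X} {v : X → X} (hv : unaryOp v ∈ C)
    (hinv : ∀ γ : Equiv.Perm X, (∀ x ∈ S, γ x = x) → ∀ x, v (γ x) = v x)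
    {f : (Fin (0 + 1) → X) → X} (hf : GenC C S 0 f) :
    (⟨0, fun x => f (fun _ => v (x 0))⟩ : Ops X) ∈ C := by
  induction hf with
  | base γ k h =>
    have := conj_mem hsym γ hv
    convert this using 4
    rename_i x
    have := hinv γ h (γ.symm (x 0))
    funext _
    simpa using this
  | step m t ht g hg ih =>
    exact hC.2 m 0 t ht (fun i x => g i (fun _ => v (x 0))) ih

theorem core {X : Type u} {C : Set (Ops X)} (hsym : IsSymmetricClone C)
    (hpre : IsPrecompleteClone C) [Nonempty X] (e : X ≃ X × Fin 3) (α : Equiv.Perm X)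
    (hα : ∀ x, (e x).2 ≠ 0 → α x = x) (hn : unaryOp ⇑α ∉ C) (h : X → X) :
    unaryOp h ∈ C := by
  have hC := hpre.1
  have hgen : ∀ (i : Fin 3) (n : ℕ) (f : (Fin (n + 1) → X) → X),
      GenC C {x | (e x).2 ≠ i} n f := by
    intro i n f
    let σ : Equiv.Perm X := (e.trans ((Equiv.refl X).prodCongr (Equiv.addRight i))).trans e.symm
    refine genC_all hsym hpre ((σ.symm.trans α).trans σ) ?_ ?_ f
    · intro x hx
      have : α (σ.symm x) = σ.symm x := by
        apply hα
        simp only [Set.mem_ofPred_eq] at hx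
        simp [σ, sub_eq_zero, ← sub_eq_add_neg, hx]
      simp [this]
    · intro hmem
      apply hn
      have := conj_mem hsym σ.symm hmem
      simpa [unaryOp] using this
  have hU : ∀ i : Fin 3, ∃ u : X → X, unaryOp u ∈ C ∧ (∀ x, (e (u x)).2 ≠ 0) ∧
      ∀ x y, (e x).2 = i → ((e y).2 = i ∨ (e y).2 = i + 1) → u x = u y → x = y := by
    intro i
    obtain ⟨x0⟩ := ‹Nonempty X›
    let c := e.symm (x0, i + 1)
    have hc : (e c).2 = i + 1 := by simp [c]
    have h1 : i + 1 ≠ i := (by decide : ∀ i : Fin 3, i + 1 ≠ i) i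
    have h2 : i ≠ i + 2 := (by decide : ∀ i : Fin 3, i ≠ i + 2) i
    have h3 : i + 1 ≠ i + 2 := (by decide : ∀ i : Fin 3, i + 1 ≠ i + 2) i
    obtain ⟨t, ht, ht'⟩ := genC_ext hC (hgen (i + 2) 0 (fun x => if (e (x 0)).2 = i then x 0 else c))
    let v : X → X := fun x => t (fun _ => x)
    have hv : unaryOp v ∈ C := by
      convert ht using 1
      unfold unaryOp
      congr 1
      funext x
      simp only [v]
      congr 1
      funext j
      rw [(Subsingleton.elim (α := Fin 1) j 0 : j = 0)]
    have hvi : ∀ x, (e x).2 = i → v x = x := by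
      intro x hx
      have := ht' (fun _ => x) (fun _ => by simp only [Set.mem_ofPred_eq, hx]; exact h2)
      simpa [hx] using this
    have hvc : ∀ x, (e x).2 = i + 1 → v x = c := by
      intro x hx
      have := ht' (fun _ => x) (fun _ => by simp only [Set.mem_ofPred_eq, hx]; exact h3)
      simpa [hx] using this
    have hm := genC_comp hsym hC hv (S := {x | (e x).2 ≠ i + 1}) ?_
      (hgen (i + 1) 0 (fun x => e.symm (x 0, 1)))
    · refine ⟨fun x => e.symm (v x, 1), hm, fun x => by simp, ?_⟩
      intro x y hx hy hxy
      have hxy : v x = v y := by simpa using hxy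
      rw [hvi x hx] at hxy
      rcases hy with hy | hy
      · rwa [hvi y hy] at hxy
      · rw [hvc y hy] at hxy
        rw [hxy, hc] at hx
        exact absurd hx h1
    · intro γ hγ x
      by_cases hx : (e x).2 = i + 1
      · have : (e (γ x)).2 = i + 1 := by
          by_contra hne
          have h5 := hγ (γ x) hne
          have h6 := γ.injective h5
          rw [h6] at hne
          exact hne hx
        rw [hvc _ hx, hvc _ this]
      · rw [hγ x hx]
  choose u huC hur hui using hU
  let W : X → (Fin 3 → X) := fun x i => u i x
  have hW : Function.Injective W := by
    intro x y hxy
    have hk : ∀ i, u i x = u i y := fun i => congrFun hxy i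
    have key : ∀ a b : Fin 3, (b = a ∨ b = a + 1) ∨ a = b + 1 := by decide
    rcases key (e x).2 (e y).2 with h' | h'
    · exact hui _ x y rfl h' (hk _)
    · exact (hui _ y x rfl (Or.inr h') (hk _).symm).symm
  obtain ⟨t, ht, ht'⟩ := genC_ext hC (hgen 0 2 (fun z => h (Function.invFun W z)))
  have := hC.2 2 0 t ht (fun i x => u i (x 0)) (fun i => huC i)
  convert this using 1
  unfold unaryOp
  congr 1
  funext x
  rw [ht' _ (fun i => hur i (x 0))]
  have := Function.leftInverse_invFun hW (x 0)
  exact congrArg h this.symm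

theorem exists_equiv {X : Type u} [Infinite X] (α : Equiv.Perm X)
    (hF : #{x // α x = x} = #X) :
    ∃ e : X ≃ X × Fin 3, ∀ x, (e x).2 ≠ 0 → α x = x := by
  classical
  obtain ⟨f⟩ : Nonempty ({x // α x = x} ≃ X × Fin 3) := by
    rw [← Cardinal.eq, hF, Cardinal.mk_prod]
    simp only [Cardinal.lift_uzero, Cardinal.mk_fin, Cardinal.lift_natCast]
    exact (Cardinal.mul_eq_left (Cardinal.aleph0_le_mk X)
      ((Cardinal.natCast_lt_aleph0).le.trans (Cardinal.aleph0_le_mk X)) (by simp)).symm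
  let p : X → Fin 3 := fun x => if hx : α x = x then (f ⟨x, hx⟩).2 else 0
  have hp : ∀ i, Nonempty ({x // p x = i} ≃ X) := by
    intro i
    rw [← Cardinal.eq]
    apply le_antisymm (Cardinal.mk_subtype_le _)
    refine Cardinal.mk_le_of_injective (f := fun x => ⟨(f.symm (x, i)).1, ?_⟩) ?_
    · simp only [p]
      rw [dif_pos (f.symm (x, i)).2]
      simp
    · intro x y hxy
      have h1 := congrArg Subtype.val hxy
      have h2 := f.symm.injective (Subtype.ext h1)
      exact congrArg Prod.fst h2
  let g := fun i => (hp i).some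
  refine ⟨(Equiv.sigmaFiberEquiv p).symm.trans ((Equiv.sigmaCongrRight g).trans
    ((Equiv.sigmaEquivProd (Fin 3) X).trans (Equiv.prodComm _ _))), ?_⟩
  intro x hx
  have hx : p x ≠ 0 := hx
  by_contra hne
  exact hx (by simp [p, hne])

theorem exists_disj {X : Type u} [Infinite X] (σ : Equiv.Perm X)
    (hF : #{x // σ x = x} ≠ #X) :
    ∃ D : Set X, #D = #X ∧ ∀ x ∈ D, σ x ∉ D := by
  obtain ⟨D, hD⟩ := zorn_subset {D : Set X | ∀ x ∈ D, σ x ∉ D} (by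
    intro c hc hchain
    refine ⟨⋃₀ c, ?_, fun s hs => Set.subset_sUnion_of_mem hs⟩
    rintro x ⟨s, hs, hxs⟩ ⟨t, ht, hxt⟩
    rcases hchain.total hs ht with h | h
    · exact hc ht x (h hxs) hxt
    · exact hc hs x hxs (h hxt))
  refine ⟨D, ?_, hD.prop⟩
  have hcov : (Set.univ : Set X) ⊆ {x | σ x = x} ∪ (D ∪ (σ '' D ∪ σ.symm '' D)) := by
    intro x _
    by_contra hx
    simp only [Set.mem_union, Set.mem_ofPred_eq, not_or] at hx
    obtain ⟨h1, h2, h3, h4⟩ := hx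
    have h3' : σ.symm x ∉ D := fun h => h3 ⟨_, h, by simp⟩
    have h4' : σ x ∉ D := fun h => h4 ⟨_, h, by simp⟩
    have : insert x D ∈ {D : Set X | ∀ x ∈ D, σ x ∉ D} := by
      rintro y (rfl | hy) (h | h)
      · exact h1 h
      · exact h4' h
      · apply h3'
        rw [← h]; simpa using hy
      · exact hD.prop y hy h
    exact h2 (hD.le_of_ge this (Set.subset_insert _ _) (Set.mem_insert _ _))
  by_contra hne
  have hlt : #D < #X := lt_of_le_of_ne (Cardinal.mk_set_le D) hne
  have hlt' : #{x | σ x = x} < #X := lt_of_le_of_ne (Cardinal.mk_set_le _) hF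
  have hi := Cardinal.aleph0_le_mk X
  have := Cardinal.mk_le_mk_of_subset hcov
  rw [Cardinal.mk_univ] at this
  refine absurd this (not_le.2 ?_)
  refine (Cardinal.mk_union_le _ _).trans_lt (Cardinal.add_lt_of_lt hi hlt' ?_)
  refine (Cardinal.mk_union_le _ _).trans_lt (Cardinal.add_lt_of_lt hi hlt ?_)
  exact (Cardinal.mk_union_le _ _).trans_lt (Cardinal.add_lt_of_lt hi
    (Cardinal.mk_image_le.trans_lt hlt) (Cardinal.mk_image_le.trans_lt hlt))

theorem exists_factor {X : Type u} [Infinite X] (σ : Equiv.Perm X)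
    (hF : #{x // σ x = x} ≠ #X) :
    ∃ τ ρ : Equiv.Perm X, σ = τ * ρ ∧ #{x // τ x = x} = #X ∧ #{x // ρ x = x} = #X := by
  classical
  obtain ⟨D, hD, hdisj⟩ := exists_disj σ hF
  obtain ⟨f⟩ : Nonempty (D ≃ X ⊕ X) := by
    rw [← Cardinal.eq, hD, Cardinal.mk_sum]
    simp [Cardinal.add_eq_self (Cardinal.aleph0_le_mk X)]
  let a : X → X := fun x => (f.symm (Sum.inl x)).1
  let b : X → X := fun x => (f.symm (Sum.inr x)).1
  have ha : Function.Injective a := fun x y h =>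
    Sum.inl_injective (f.symm.injective (Subtype.ext h))
  have hb : Function.Injective b := fun x y h =>
    Sum.inr_injective (f.symm.injective (Subtype.ext h))
  have haD : ∀ x, a x ∈ D := fun x => (f.symm (Sum.inl x)).2
  have hbD : ∀ x, b x ∈ D := fun x => (f.symm (Sum.inr x)).2
  have hab : ∀ x y, a x ≠ b y := fun x y h => by
    have := f.symm.injective (Subtype.ext h)
    simp at this
  have haa : ∀ x y, σ (a x) ≠ a y := fun x y h => hdisj _ (haD x) (h ▸ haD y)
  let τf : X → X := fun x =>
    if x ∈ Set.range a then σ x else if σ.symm x ∈ Set.range a then σ.symm x else x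
  have hτ1 : ∀ x, τf (a x) = σ (a x) := fun x => by simp [τf]
  have hτ2 : ∀ x, τf (σ (a x)) = a x := fun x => by
    have : σ (a x) ∉ Set.range a := by
      rintro ⟨y, hy⟩; exact haa x y hy.symm
    simp only [τf]
    rw [if_neg this]; simp
  have hinv : Function.Involutive τf := by
    intro x
    by_cases h1 : x ∈ Set.range a
    · obtain ⟨y, rfl⟩ := h1
      rw [hτ1, hτ2]
    · by_cases h2 : σ.symm x ∈ Set.range a
      · obtain ⟨y, hy⟩ := h2
        have : x = σ (a y) := by rw [hy]; simp
        rw [this, hτ2, hτ1]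
      · have : τf x = x := by simp only [τf]; rw [if_neg h1, if_neg h2]
        rw [this, this]
  let τ : Equiv.Perm X := hinv.toPerm
  refine ⟨τ, τ⁻¹ * σ, by group, ?_, ?_⟩
  · apply le_antisymm (Cardinal.mk_subtype_le _)
    refine Cardinal.mk_le_of_injective (f := fun x => ⟨b x, ?_⟩) ?_
    · change τf (b x) = b x
      have h1 : b x ∉ Set.range a := by rintro ⟨y, hy⟩; exact hab y x hy
      have h2 : σ.symm (b x) ∉ Set.range a := by
        rintro ⟨y, hy⟩
        apply hdisj _ (haD y)
        rw [hy]; simpa using hbD x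
      simp only [τf]; rw [if_neg h1, if_neg h2]
    · intro x y h; have h' := congrArg Subtype.val h; exact hb h'
  · apply le_antisymm (Cardinal.mk_subtype_le _)
    refine Cardinal.mk_le_of_injective (f := fun x => ⟨a x, ?_⟩) ?_
    · rw [Equiv.Perm.mul_apply, Equiv.Perm.inv_eq_iff_eq]
      exact (hτ1 x).symm
    · intro x y h; have h' := congrArg Subtype.val h; exact ha h'

/-- **Pinsker**: on an infinite set, every symmetric precomplete clone contains all
permutations. -/
theorem stmt12 {X : Type u} [Infinite X] (C : Set (Ops X))
    (hsym : IsSymmetricClone C) (hpre : IsPrecompleteClone C) :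
    ∀ γ : Equiv.Perm X, unaryOp ⇑γ ∈ C := by
  have key : ∀ γ : Equiv.Perm X, #{x // γ x = x} = #X → unaryOp ⇑γ ∈ C := by
    intro γ hγ
    by_contra hn
    obtain ⟨e, he⟩ := exists_equiv γ hγ
    exact hn (core hsym hpre e γ he hn γ)
  intro γ
  by_cases hγ : #{x // γ x = x} = #X
  · exact key γ hγ
  · obtain ⟨τ, ρ, rfl, h1, h2⟩ := exists_factor γ hγ
    exact hpre.1.2 0 0 _ (key τ h1) (fun _ x => ρ (x 0)) (fun _ => key ρ h2)
end

section
/- Let X be an infinite set. Every minimal operation on X is of one of the following types: (1) a unary operation f with f∘f = f, or a unary non-identity permutation f such that the p-fold iterate of f is the identity for some prime number p; (2) a binary idempotent operation; (3) a ternary majority operation; (4) the ternary operation (x,y,z) ↦ x+y+z for some abelian group structure (X,+) in which every element satisfies x+x = 0; (5) an n-ary semiprojection with n > 2. -/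
universe u v

open Cardinal

/-- The trivial clone of all projections. -/
def projClone (X : Type u) : Set (Ops X) :=
  {f : Ops X | ∃ k : Fin (f.1 + 1), ∀ x, f.2 x = x k}

/-- A minimal clone: an atom of the clone lattice. -/
def IsMinimalClone {X : Type u} (C : Set (Ops X)) : Prop :=
  IsClone C ∧ C ≠ projClone X ∧
    ∀ D : Set (Ops X), IsClone D → D ⊆ C → D = projClone X ∨ D = C

/-- A minimal operation: it generates a minimal clone, and no operation of smaller arity
generates the same clone. -/
def IsMinimalOp {X : Type u} (f : Ops X) : Prop :=
  IsMinimalClone (cloneGen {f}) ∧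
    ∀ g : Ops X, g.1 < f.1 → cloneGen {g} ≠ cloneGen {f}

namespace Ros
variable {X : Type u}

theorem gen_clone (F : Set (Ops X)) : IsClone (cloneGen F) := by
  constructor
  · intro n k C hC
    exact hC.1.1 n k
  · intro n m f hf g hg C hC
    exact hC.1.2 n m f (hf C hC) g (fun i => hg i C hC)

theorem gen_self (f : Ops X) : f ∈ cloneGen {f} := fun C hC => hC.2 rfl

theorem gen_le {f : Ops X} {C : Set (Ops X)} (hC : IsClone C) (h : f ∈ C) :
    cloneGen {f} ⊆ C := fun g hg => hg C ⟨hC, by simpa using h⟩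

theorem proj_clone : IsClone (projClone X) := by
  constructor
  · intro n k
    exact ⟨k, fun x => rfl⟩
  · rintro n m f ⟨k, hk⟩ g hg
    obtain ⟨l, hl⟩ := hg k
    exact ⟨l, fun x => by simp only at hk hl ⊢; rw [hk, hl]⟩

theorem proj_le {C : Set (Ops X)} (hC : IsClone C) : projClone X ⊆ C := by
  rintro ⟨n, f⟩ ⟨k, hk⟩
  have : f = fun x => x k := funext hk
  rw [this]
  exact hC.1 n k

theorem not_proj {f : Ops X} (hf : IsMinimalClone (cloneGen {f})) : f ∉ projClone X := by
  intro h
  exact hf.2.1 (Set.Subset.antisymm (gen_le proj_clone h) (proj_le (gen_clone _)))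

theorem min_le {C D : Set (Ops X)} (hC : IsMinimalClone C) {g : Ops X} (hg : g ∈ C)
    (hgp : g ∉ projClone X) (hD : IsClone D) (hgD : g ∈ D) : C ⊆ D := by
  rcases hC.2.2 _ (gen_clone {g}) (gen_le hC.1 hg) with h | h
  · exact absurd (h ▸ gen_self g) hgp
  · rw [← h]; exact gen_le hD hgD

theorem low {f : Ops X} (hf : IsMinimalOp f) {g : Ops X} (hg : g ∈ cloneGen {f})
    (h : g.1 < f.1) : g ∈ projClone X := by
  rcases hf.1.2.2 _ (gen_clone {g}) (gen_le (gen_clone _) hg) with h1 | h1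
  · exact h1 ▸ gen_self g
  · exact absurd h1 (hf.2 g h)

/-- unary clone -/
def iterClone (F : X → X) : Set (Ops X) :=
  {h | ∃ (r : ℕ) (k : Fin (h.1 + 1)), ∀ x, h.2 x = F^[r] (x k)}

theorem iter_clone (F : X → X) : IsClone (iterClone F) := by
  constructor
  · intro n k
    exact ⟨0, k, fun x => rfl⟩
  · rintro n m f ⟨r, k, hk⟩ g hg
    obtain ⟨s, l, hl⟩ := hg k
    refine ⟨r + s, l, fun x => ?_⟩
    simp only at hk hl ⊢
    rw [hk, hl, Function.iterate_add_apply]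

theorem iter_mem {C : Set (Ops X)} (hC : IsClone C) {F : X → X} (h : unaryOp F ∈ C) (r : ℕ) :
    unaryOp (F^[r]) ∈ C := by
  induction r with
  | zero => exact hC.1 0 0
  | succ r ih =>
    have := hC.2 0 0 _ ih (fun _ => (unaryOp F).2) (fun _ => h)
    exact this

theorem unary_case {F : X → X} (hf : IsMinimalClone (cloneGen {unaryOp F})) :
    (∀ a, F (F a) = F a) ∨ (Function.Bijective F ∧ F ≠ id ∧ ∃ p : ℕ, p.Prime ∧ F^[p] = id) := by
  have hid : F ≠ id := by
    intro h
    exact not_proj hf ⟨0, fun x => by rw [h]; rfl⟩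
  have key : ∀ r, F^[r] ≠ id → ∃ k, F = F^[r * k] := by
    intro r hr
    have h1 : unaryOp (F^[r]) ∉ projClone X := by
      rintro ⟨k, hk⟩
      apply hr
      funext a
      have := hk (fun _ => a)
      simpa [unaryOp] using this
    obtain ⟨k, i, hk⟩ := min_le hf (iter_mem (gen_clone _) (gen_self _) r) h1
      (iter_clone (F^[r])) ⟨1, 0, fun x => rfl⟩ (gen_self _)
    refine ⟨k, funext fun a => ?_⟩
    have := hk (fun _ => a)
    rw [Function.iterate_mul]
    simpa [unaryOp] using this
  -- finite order implies prime order
  have fin : ∀ r, 0 < r → F^[r] = id → Function.Bijective F ∧ F ≠ id ∧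
      ∃ p : ℕ, p.Prime ∧ F^[p] = id := by
    intro r hr h
    have hb : Function.Bijective F := by
      obtain ⟨s, rfl⟩ : ∃ s, r = s + 1 := ⟨r - 1, by omega⟩
      constructor
      · apply Function.Injective.of_comp (f := F^[s])
        rw [← Function.iterate_succ, h]; exact Function.injective_id
      · apply Function.Surjective.of_comp (g := F^[s])
        rw [← Function.iterate_succ', h]; exact Function.surjective_id
    refine ⟨hb, hid, ?_⟩
    -- minimal positive r
    have hex : ∃ r, 0 < r ∧ F^[r] = id := ⟨r, hr, h⟩
    classical
    obtain ⟨h0, h1⟩ := Nat.find_spec hex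
    set q := Nat.find hex with hq
    have hq1 : q ≠ 1 := by
      intro e; rw [e] at h1; exact hid h1
    obtain ⟨p, hp, t, ht⟩ := Nat.exists_prime_and_dvd hq1
    have ht0 : 0 < t := by
      rcases Nat.eq_zero_or_pos t with e | e
      · subst e; omega
      · exact e
    have htq : t < q := by
      rw [ht]; have := hp.two_le; nlinarith
    have hne : F^[t] ≠ id := fun e => Nat.find_min hex htq ⟨ht0, e⟩
    obtain ⟨k, hk⟩ := key t hne
    refine ⟨p, hp, ?_⟩
    rw [hk, ← Function.iterate_mul]
    have : t * k * p = q * k := by rw [ht]; ring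
    rw [this, Function.iterate_mul, h1, Function.iterate_id]
  by_cases h2 : F^[2] = id
  · exact Or.inr (fin 2 (by norm_num) h2)
  obtain ⟨k, hk⟩ := key 2 h2
  have hk0 : k ≠ 0 := by rintro rfl; exact hid hk
  obtain ⟨m, hm⟩ : ∃ m, 2 * k = m + 1 + 1 := ⟨2 * k - 2, by omega⟩
  rw [hm] at hk
  by_cases he : F^[m+1] = id
  · exact Or.inr (fin _ (by omega) he)
  left
  obtain ⟨l, hl⟩ := key _ he
  have hE : ∀ a, F^[m+1] (F^[m+1] a) = F^[m+1] a := by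
    intro a
    rw [← Function.iterate_add_apply]
    have : m + 1 + (m + 1) = m + (m + 1 + 1) := by ring
    rw [this, Function.iterate_add_apply, ← hk, ← Function.iterate_succ_apply]
  have hEl : ∀ l, (F^[m+1])^[l+1] = F^[m+1] := by
    intro l
    induction l with
    | zero => rfl
    | succ l ih => rw [Function.iterate_succ, ih]; funext a; exact hE a
  have hl0 : l ≠ 0 := by rintro rfl; exact hid hl
  obtain ⟨s, rfl⟩ : ∃ s, l = s + 1 := ⟨l - 1, by omega⟩
  rw [Function.iterate_mul, hEl] at hl
  intro a
  have := hE a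
  rwa [← hl] at this

/-- projections on two-valued tuples -/
def P2 (X : Type u) : Set (Ops X) :=
  {h | ∃ k : Fin (h.1 + 1), ∀ x a b, (∀ i, x i = a ∨ x i = b) → h.2 x = x k}

theorem P2_clone : IsClone (P2 X) := by
  constructor
  · intro n k
    exact ⟨k, fun x a b _ => rfl⟩
  · rintro n m f ⟨k, hk⟩ g hg
    choose l hl using hg
    refine ⟨l k, fun x a b hx => ?_⟩
    simp only at hk hl ⊢
    rw [hk _ a b]
    · exact hl k x a b hx
    · intro i
      rw [hl i x a b hx]
      exact hx _

/-- operations monotone on `a < b` -/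
def Mon (a b : X) : Set (Ops X) :=
  {h | ∀ x y : Fin (h.1 + 1) → X,
    (∀ i, (x i = a ∧ y i = a) ∨ (x i = a ∧ y i = b) ∨ (x i = b ∧ y i = b)) →
    (h.2 x = a ∧ h.2 y = a) ∨ (h.2 x = a ∧ h.2 y = b) ∨ (h.2 x = b ∧ h.2 y = b)}

theorem Mon_clone (a b : X) : IsClone (Mon a b) := by
  constructor
  · intro n k x y h
    exact h k
  · intro n m f hf g hg x y h
    exact hf _ _ (fun i => hg i x y h)

theorem comp3 {C : Set (Ops X)} (hC : IsClone C) {F : (Fin 3 → X) → X} (hF : (⟨2, F⟩ : Ops X) ∈ C)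
    {m : ℕ} {g0 g1 g2 : (Fin (m + 1) → X) → X} (h0 : (⟨m, g0⟩ : Ops X) ∈ C)
    (h1 : (⟨m, g1⟩ : Ops X) ∈ C) (h2 : (⟨m, g2⟩ : Ops X) ∈ C) :
    (⟨m, fun x => F ![g0 x, g1 x, g2 x]⟩ : Ops X) ∈ C := by
  have := hC.2 2 m F hF ![g0, g1, g2] (by
    intro i; fin_cases i
    · exact h0
    · exact h1
    · exact h2)
  have e : (fun x => F ![g0 x, g1 x, g2 x]) = fun x => F fun i => ![g0, g1, g2] i x := by
    funext x
    congr 1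
    funext i; fin_cases i <;> rfl
  rw [e]; exact this

theorem vec3 (x : Fin 3 → X) : ![x 0, x 1, x 2] = x := by
  funext i; fin_cases i <;> rfl

/-- No Pixley operation in a minimal clone -/
theorem no_pixley [Nontrivial X] {C : Set (Ops X)} (hC : IsMinimalClone C) {F : (Fin 3 → X) → X}
    (hF : (⟨2, F⟩ : Ops X) ∈ C) (h1 : ∀ x y, F ![x, x, y] = y) (h2 : ∀ x y, F ![x, y, x] = x)
    (h3 : ∀ x y, F ![y, x, x] = y) : False := by
  obtain ⟨a, b, hab⟩ := exists_pair_ne X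
  have pr := fun k => hC.1.1 2 k
  have hF' : (⟨2, fun x => F ![x 0, x 1, x 2]⟩ : Ops X) ∈ C := comp3 hC.1 hF (pr 0) (pr 1) (pr 2)
  have hg := comp3 hC.1 hF (pr 0) hF' (pr 2)
  set G : (Fin 3 → X) → X := fun x => F ![x 0, F ![x 0, x 1, x 2], x 2] with hG
  have g1 : ∀ x : Fin 3 → X, x 0 = x 1 → G x = x 0 := by
    intro x h; simp only [hG, ← h, h1, h3]
  have g2 : ∀ x : Fin 3 → X, x 0 = x 2 → G x = x 0 := by
    intro x h; simp only [hG, ← h, h2]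
  have g3 : ∀ x : Fin 3 → X, x 1 = x 2 → G x = x 1 := by
    intro x h; simp only [hG, ← h, h1, h3]
  have hm := min_le hC hg (by
    rintro ⟨k, hk⟩
    simp only at hk
    have e1 := hk ![a, a, b]
    have e2 := hk ![a, b, a]
    have e3 := hk ![b, a, a]
    rw [g1 _ rfl] at e1
    rw [g2 _ rfl] at e2
    rw [g3 _ rfl] at e3
    fin_cases k <;> simp_all) (Mon_clone a b) (by
    intro x y h
    have i0 := h 0
    have i1 := h 1
    have i2 := h 2
    have A1 := g1 x
    have A2 := g2 x
    have A3 := g3 x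
    have B1 := g1 y
    have B2 := g2 y
    have B3 := g3 y
    simp only
    clear_value G
    clear hG
    grind) hF
  have := hm ![a, a, b] ![a, b, b] (by
    intro i; fin_cases i <;> simp)
  simp only [h1, h3] at this
  grind

theorem semi_proj [Nontrivial X] {C : Set (Ops X)} (hC : IsMinimalClone C) {f : Ops X}
    (hf : f ∈ C) (hfP : f ∉ P2 X) {m : ℕ} {G : (Fin (m + 1) → X) → X} (hG : (⟨m, G⟩ : Ops X) ∈ C)
    (k : Fin (m + 1)) (h : ∀ x a b, (∀ i, x i = a ∨ x i = b) → G x = x k) (x) : G x = x k := by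
  by_cases hp : (⟨m, G⟩ : Ops X) ∈ projClone X
  · obtain ⟨l, hl⟩ := hp
    obtain ⟨a, b, hab⟩ := exists_pair_ne X
    have e : l = k := by
      by_contra hne
      have h1 := h (fun i => if i = k then a else b) a b (by intro i; grind)
      have h2 := hl (fun i => if i = k then a else b)
      simp only at h2
      rw [h1] at h2
      simp [hne, hab] at h2
    rw [← e]; exact hl x
  · exact absurd (min_le hC hG hp P2_clone ⟨k, h⟩ hf) hfP

theorem minority [Nontrivial X] {C : Set (Ops X)} (hC : IsMinimalClone C) {F : (Fin 3 → X) → X}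
    (hF : (⟨2, F⟩ : Ops X) ∈ C) (h1 : ∀ x y, F ![x, x, y] = y) (h2 : ∀ x y, F ![x, y, x] = y)
    (h3 : ∀ x y, F ![y, x, x] = y) :
    ∃ _inst : AddCommGroup X, (∀ x : X, x + x = 0) ∧
        ∀ x y z : X, F ![x, y, z] = x + y + z := by
  obtain ⟨o, b, hab⟩ := exists_pair_ne X
  have hP : (⟨2, F⟩ : Ops X) ∉ P2 X := by
    rintro ⟨k, hk⟩
    simp only at hk
    have e1 := hk ![o, o, b] o b (by intro i; fin_cases i <;> simp)
    have e2 := hk ![o, b, o] o b (by intro i; fin_cases i <;> simp)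
    have e3 := hk ![b, o, o] o b (by intro i; fin_cases i <;> simp)
    rw [h1] at e1
    rw [h2] at e2
    rw [h3] at e3
    fin_cases k
    · exact hab e1.symm
    · exact hab e3.symm
    · exact hab e3.symm
  have pr := fun k => hC.1.1 2 k
  have pr4 := fun k => hC.1.1 3 k
  have s1 : ∀ x y z, F ![x, y, F ![x, y, z]] = z := by
    intro x y z
    have := semi_proj hC hF hP (comp3 hC.1 hF (pr 0) (pr 1) (comp3 hC.1 hF (pr 0) (pr 1) (pr 2))) 2
      (by
        intro x a b hx
        have i0 := hx 0
        have i1 := hx 1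
        have i2 := hx 2
        grind) ![x, y, z]
    simpa using this
  have s2 : ∀ x y z, F ![y, x, z] = F ![x, y, z] := by
    intro x y z
    have := semi_proj hC hF hP (comp3 hC.1 hF (pr 0) (pr 1) (comp3 hC.1 hF (pr 1) (pr 0) (pr 2))) 2
      (by
        intro x a b hx
        have i0 := hx 0
        have i1 := hx 1
        have i2 := hx 2
        grind) ![x, y, z]
    have h : F ![x, y, F ![y, x, z]] = z := by simpa using this
    rw [← s1 x y (F ![y, x, z]), h]
  have s3 : ∀ x y z, F ![x, z, y] = F ![x, y, z] := by
    intro x y z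
    have := semi_proj hC hF hP (comp3 hC.1 hF (pr 0) (pr 1) (comp3 hC.1 hF (pr 0) (pr 2) (pr 1))) 2
      (by
        intro x a b hx
        have i0 := hx 0
        have i1 := hx 1
        have i2 := hx 2
        grind) ![x, y, z]
    have h : F ![x, y, F ![x, z, y]] = z := by simpa using this
    rw [← s1 x y (F ![x, z, y]), h]
  have s4 : ∀ x y z u, F ![F ![x, u, y], u, z] = F ![x, y, z] := by
    intro x y z u
    have := semi_proj hC hF hP (comp3 hC.1 hF (pr4 0) (pr4 1)
      (comp3 hC.1 hF (comp3 hC.1 hF (pr4 0) (pr4 3) (pr4 1)) (pr4 3) (pr4 2))) 2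
      (by
        intro x a b hx
        have i0 := hx 0
        have i1 := hx 1
        have i2 := hx 2
        have i3 := hx 3
        grind) ![x, y, z, u]
    have h : F ![x, y, F ![F ![x, u, y], u, z]] = z := by simpa using this
    rw [← s1 x y (F ![F ![x, u, y], u, z]), h]
  have comm : ∀ x y, F ![x, o, y] = F ![y, o, x] := by
    intro x y
    rw [s2, s3, s2]
  let inst : AddCommGroup X :=
    { add := fun x y => F ![x, o, y]
      zero := o
      neg := fun x => x
      nsmul := @nsmulRec X ⟨o⟩ ⟨fun x y => F ![x, o, y]⟩
      zsmul := @zsmulRec X ⟨o⟩ ⟨fun x y => F ![x, o, y]⟩ ⟨fun x => x⟩ (@nsmulRec X ⟨o⟩ ⟨fun x y => F ![x, o, y]⟩)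
      add_assoc := by
        intro x y z
        change F ![F ![x, o, y], o, z] = F ![x, o, F ![y, o, z]]
        rw [s4, comm x, s4]
        clear h1 h2 h3 s1 s4
        grind
      zero_add := fun x => h1 o x
      add_zero := fun x => h3 o x
      neg_add_cancel := fun x => h2 x o
      add_comm := comm }
  exact ⟨inst, fun x => h2 x o, fun x y z => (s4 x y z o).symm⟩

theorem ident {n : ℕ} {F : (Fin (n + 2) → X) → X} (hf : IsMinimalOp (⟨n + 1, F⟩ : Ops X))
    (i j : Fin (n + 2)) (hij : i ≠ j) : ∃ k, ∀ x, x i = x j → F x = x k := by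
  have : ∀ l, ∃ s : Fin (n + 1), j.succAbove s = if l = j then i else l := by
    intro l
    apply Fin.exists_succAbove_eq
    split_ifs with h
    · exact hij
    · exact h
  choose s hs using this
  have hm : (⟨n, fun y => F fun l => y (s l)⟩ : Ops X) ∈ cloneGen {(⟨n + 1, F⟩ : Ops X)} :=
    (gen_clone _).2 (n + 1) n F (gen_self _) (fun l y => y (s l)) (fun l => (gen_clone _).1 n (s l))
  obtain ⟨k, hk⟩ := low hf hm (Nat.lt_succ_self n)
  refine ⟨j.succAbove k, fun x hx => ?_⟩
  have := hk (fun t => x (j.succAbove t))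
  simp only [hs] at this
  rw [← this]
  congr 1
  funext l
  split_ifs with h
  · rw [h, hx]
  · rfl

theorem swier {n : ℕ} (hn : 2 ≤ n) [Nontrivial X] {F : (Fin (n + 2) → X) → X}
    (h : ∀ i j : Fin (n + 2), i ≠ j → ∃ k, ∀ x, x i = x j → F x = x k) :
    ∃ k, ∀ x, ¬ Function.Injective x → F x = x k := by
  classical
  choose! K hK using h
  obtain ⟨a, b, hab⟩ := exists_pair_ne X
  have sep : ∀ (A : Finset (Fin (n + 2))) i j p q, i ≠ j → p ≠ q → (i ∈ A ↔ j ∈ A) →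
      (p ∈ A ↔ q ∈ A) → (K i j ∈ A ↔ K p q ∈ A) := by
    intro A i j p q hij hpq h1 h2
    have e1 := hK i j hij (fun l => if l ∈ A then a else b) (by simp [h1])
    have e2 := hK p q hpq (fun l => if l ∈ A then a else b) (by simp [h2])
    rw [e1] at e2
    clear e1 hK
    grind
  have fourth : ∀ i j k : Fin (n + 2), ∃ r, r ≠ i ∧ r ≠ j ∧ r ≠ k := by
    intro i j k
    have : ∃ r, r ∉ ({i, j, k} : Finset (Fin (n + 2))) := by
      by_contra hc
      push Not at hc
      have h1 : (Finset.univ : Finset (Fin (n + 2))) ⊆ {i, j, k} := fun r _ => hc r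
      have h2 := Finset.card_le_card h1
      have h3 := Finset.card_le_three (a := i) (b := j) (c := k)
      simp at h2
      omega
    obtain ⟨r, hr⟩ := this
    exact ⟨r, by simpa using hr⟩
  by_cases hc : ∃ i j, i ≠ j ∧ K i j ≠ i ∧ K i j ≠ j
  · obtain ⟨i, j, hij, hi, hj⟩ := hc
    have gen : ∀ p q, p ≠ q → K i j ≠ p → K i j ≠ q → K p q = K i j := by
      intro p q hpq h1 h2
      have := sep {K i j} i j p q hij hpq (by simp [hi.symm, hj.symm]) (by simp [h1.symm, h2.symm])
      simpa using this
    -- K(K i j, q) ∈ {K i j, q}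
    have gen2 : ∀ p q, p ≠ q → (K i j = p ∨ K i j = q) → K p q = p ∨ K p q = q := by
      intro p q hpq hk
      by_contra hcon
      push Not at hcon
      -- set A = {p, q} if q not in {i,j}
      by_cases hq : (i ∈ ({p, q} : Finset (Fin (n + 2))) ↔ j ∈ ({p, q} : Finset (Fin (n + 2))))
      · have := sep {p, q} i j p q hij hpq hq (by simp)
        simp at this
        grind
      · obtain ⟨r, hri, hrj, hrk⟩ := fourth i j (K i j)
        have t1 := sep {p, q, i, j} i j p q hij hpq (by simp) (by simp)
        have i1 := gen i r hri.symm hi hrk.symm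
        have j1 := gen j r hrj.symm hj hrk.symm
        by_cases hip : i ∈ ({p, q} : Finset (Fin (n + 2)))
        · have t2 := sep {i, r, K i j} i r p q hri.symm hpq (by simp) (by
            simp only [Finset.mem_insert, Finset.mem_singleton] at *
            clear sep fourth gen hK
            grind)
          simp only [Finset.mem_insert, Finset.mem_singleton] at *
          clear sep fourth gen hK
          grind
        · have t2 := sep {j, r, K i j} j r p q hrj.symm hpq (by simp) (by
            simp only [Finset.mem_insert, Finset.mem_singleton] at *
            clear sep fourth gen hK
            grind)
          simp only [Finset.mem_insert, Finset.mem_singleton] at *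
          clear sep fourth gen hK
          grind
    refine ⟨K i j, fun x hx => ?_⟩
    simp only [Function.Injective, not_forall] at hx
    obtain ⟨p, q, hpq, hne⟩ := hx
    rw [hK p q hne x hpq]
    have A := gen p q hne
    have B := gen2 p q hne
    grind
  · push Not at hc
    exfalso
    obtain ⟨m, rfl⟩ : ∃ m, n = m + 2 := ⟨n - 2, by omega⟩
    have d : ∀ s t : ℕ, (hs : s < m + 2 + 2) → (ht : t < m + 2 + 2) → s ≠ t →
      (⟨s, hs⟩ : Fin (m + 2 + 2)) ≠ ⟨t, ht⟩ := by
      intro s t hs ht h e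
      exact h (Fin.mk.inj e)
    have e01 := d 0 1 (by omega) (by omega) (by omega)
    have e02 := d 0 2 (by omega) (by omega) (by omega)
    have e03 := d 0 3 (by omega) (by omega) (by omega)
    have e12 := d 1 2 (by omega) (by omega) (by omega)
    have e13 := d 1 3 (by omega) (by omega) (by omega)
    have e23 := d 2 3 (by omega) (by omega) (by omega)
    have := sep {⟨0, by omega⟩, ⟨1, by omega⟩} _ _ _ _ e01 e23 (by simp) (by simp [e02.symm, e03.symm, e12.symm, e13.symm])
    have c1 := hc _ _ e01
    have c2 := hc _ _ e23
    simp only [Finset.mem_insert, Finset.mem_singleton] at this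
    clear sep fourth hc hK d
    grind

theorem ternary [Nontrivial X] {F : (Fin 3 → X) → X} (hf : IsMinimalOp (⟨2, F⟩ : Ops X)) :
    (∀ x y : X, F ![x, x, y] = x ∧ F ![x, y, x] = x ∧ F ![y, x, x] = x) ∨
    (∃ _inst : AddCommGroup X, (∀ x : X, x + x = 0) ∧
        ∀ x y z : X, F ![x, y, z] = x + y + z) ∨
    ∃ k : Fin 3, ∀ x : Fin 3 → X, ¬ Function.Injective x → F x = x k := by
  have hmem := gen_self (⟨2, F⟩ : Ops X)
  have pr := fun k => hf.1.1.1 2 k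
  have c01 : (∀ x y, F ![x, x, y] = x) ∨ (∀ x y, F ![x, x, y] = y) := by
    obtain ⟨k, hk⟩ := ident hf 0 1 (by decide)
    have := fun x y => hk ![x, x, y] rfl
    fin_cases k
    · exact Or.inl this
    · exact Or.inl this
    · exact Or.inr this
  have c02 : (∀ x y, F ![x, y, x] = x) ∨ (∀ x y, F ![x, y, x] = y) := by
    obtain ⟨k, hk⟩ := ident hf 0 2 (by decide)
    have := fun x y => hk ![x, y, x] rfl
    fin_cases k
    · exact Or.inl this
    · exact Or.inr this
    · exact Or.inl this
  have c12 : (∀ x y, F ![y, x, x] = x) ∨ (∀ x y, F ![y, x, x] = y) := by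
    obtain ⟨k, hk⟩ := ident hf 1 2 (by decide)
    have := fun x y => hk ![y, x, x] rfl
    fin_cases k
    · exact Or.inr this
    · exact Or.inl this
    · exact Or.inl this
  have semi : ∀ k : Fin 3, (∀ x y, F ![x, x, y] = ![x, x, y] k) → (∀ x y, F ![x, y, x] = ![x, y, x] k) →
      (∀ x y, F ![y, x, x] = ![y, x, x] k) → ∀ x : Fin 3 → X, ¬ Function.Injective x → F x = x k := by
    intro k a1 a2 a3 x hx
    have : x 0 = x 1 ∨ x 0 = x 2 ∨ x 1 = x 2 := by
      by_contra hc
      apply hx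
      intro i j hij
      fin_cases i <;> fin_cases j <;> simp_all
    have hv := vec3 x
    rcases this with h | h | h
    · have := a1 (x 0) (x 2)
      rw [← h] at hv; rwa [hv] at this
    · have := a2 (x 0) (x 1)
      rw [← h] at hv; rwa [hv] at this
    · have := a3 (x 1) (x 0)
      rw [← h] at hv; rwa [hv] at this
  rcases c01 with a1 | a1 <;> rcases c02 with a2 | a2 <;> rcases c12 with a3 | a3
  · exact Or.inl fun x y => ⟨a1 x y, a2 x y, a3 x y⟩
  · exact Or.inr (Or.inr ⟨0, semi 0 a1 a2 a3⟩)
  · exact Or.inr (Or.inr ⟨1, semi 1 a1 a2 a3⟩)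
  · exfalso
    -- F x x y = x, F x y x = y, F y x x = y
    refine no_pixley hf.1 (comp3 hf.1.1 hmem (pr 0) (pr 2) (pr 1)) ?_ ?_ ?_ <;> intro x y <;> simp [a1, a2, a3]
  · exact Or.inr (Or.inr ⟨2, semi 2 a1 a2 a3⟩)
  · exact (no_pixley hf.1 hmem a1 a2 a3).elim
  · exfalso
    refine no_pixley hf.1 (comp3 hf.1.1 hmem (pr 1) (pr 0) (pr 2)) ?_ ?_ ?_ <;> intro x y <;> simp [a1, a2, a3]
  · exact Or.inr (Or.inl (minority hf.1 hmem a1 a2 a3))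

end Ros

/-- **Rosenberg's five types theorem** for minimal operations on an infinite set. -/
theorem stmt13 {X : Type u} [Infinite X] (f : Ops X) (hf : IsMinimalOp f) :
    -- (1) unary: either `F ∘ F = F`, or a non-identity permutation of prime order
    (∃ F : (Fin 1 → X) → X, f = ⟨0, F⟩ ∧
      ((∀ a : X, F (fun _ => F fun _ => a) = F fun _ => a) ∨
        (Function.Bijective (fun a : X => F fun _ => a) ∧
          (fun a : X => F fun _ => a) ≠ id ∧
          ∃ p : ℕ, p.Prime ∧ (fun a : X => F fun _ => a)^[p] = id))) ∨
    -- (2) binary idempotent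
    (∃ F : (Fin 2 → X) → X, f = ⟨1, F⟩ ∧ ∀ a : X, F (fun _ => a) = a) ∨
    -- (3) ternary majority
    (∃ F : (Fin 3 → X) → X, f = ⟨2, F⟩ ∧
      ∀ x y : X, F ![x, x, y] = x ∧ F ![x, y, x] = x ∧ F ![y, x, x] = x) ∨
    -- (4) `x + y + z` in an elementary abelian 2-group
    (∃ F : (Fin 3 → X) → X, f = ⟨2, F⟩ ∧
      ∃ _inst : AddCommGroup X, (∀ x : X, x + x = 0) ∧
        ∀ x y z : X, F ![x, y, z] = x + y + z) ∨
    -- (5) semiprojection of arity `> 2`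
    (2 < f.1 + 1 ∧ ∃ k : Fin (f.1 + 1),
      ∀ x : Fin (f.1 + 1) → X, ¬ Function.Injective x → f.2 x = x k) := by
  obtain ⟨n, F⟩ := f
  match n, F, hf with
  | 0, F, hf =>
    left
    refine ⟨F, rfl, ?_⟩
    have e : (⟨0, F⟩ : Ops X) = unaryOp (fun a : X => F fun _ => a) := by
      unfold unaryOp
      congr 1
      funext x
      congr 1
      funext i
      exact congrArg x (Subsingleton.elim (α := Fin 1) i 0)
    have h := hf.1
    rw [e] at h
    exact Ros.unary_case h
  | 1, F, hf =>
    right; left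
    refine ⟨F, rfl, fun a => ?_⟩
    obtain ⟨k, hk⟩ := Ros.ident hf 0 1 (by decide)
    exact hk (fun _ => a) rfl
  | 2, F, hf =>
    rcases Ros.ternary hf with h | h | h
    · exact Or.inr (Or.inr (Or.inl ⟨F, rfl, h⟩))
    · exact Or.inr (Or.inr (Or.inr (Or.inl ⟨F, rfl, h⟩)))
    · exact Or.inr (Or.inr (Or.inr (Or.inr ⟨by simp, h⟩)))
  | n + 3, F, hf =>
    right; right; right; right
    refine ⟨by simp, ?_⟩
    exact Ros.swier (n := n + 2) (by omega) (Ros.ident hf)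
end

section
/- Let X be an infinite set. For a filter D on X (with the improper filter containing ∅ allowed), let C_D = {f ∈ O : there is A ∈ D such that f(x,…,x) = x for all x ∈ A}. Then: (1) C_D is a clone for every filter D; (2) C_{{X}} is the clone of all idempotent operations, and C_D = O when D is the improper filter; (3) if D_1 ⊊ D_2 are filters then C_{D_1} ⊊ C_{D_2}; (4) every clone C with C_{{X}} ⊆ C ⊆ O equals C_D for some filter D on X. -/
universe u v

open Cardinal

/-- A filter on `X` (the improper filter, i.e. the full power set, is allowed). -/
def IsFilterSet {X : Type u} (D : Set (Set X)) : Prop :=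
  D.Nonempty ∧ (∀ A ∈ D, ∀ B : Set X, A ⊆ B → B ∈ D) ∧
    ∀ A ∈ D, ∀ B ∈ D, A ∩ B ∈ D

/-- The clone `C_D` of operations idempotent on some set of the filter `D`. -/
def filterClone {X : Type u} (D : Set (Set X)) : Set (Ops X) :=
  {f : Ops X | ∃ A ∈ D, ∀ x ∈ A, f.2 (fun _ => x) = x}

theorem aux_iInter {X : Type u} {D : Set (Set X)} (hD : IsFilterSet D) {n : ℕ}
    (A : Fin n → Set X) (hA : ∀ i, A i ∈ D) : (⋂ i, A i) ∈ D := by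
  obtain ⟨⟨B, hB⟩, hup, hint⟩ := hD
  let F : Filter X :=
    { sets := D
      univ_sets := hup B hB _ (Set.subset_univ _)
      sets_of_superset := fun {x y} hx hxy => hup x hx y hxy
      inter_sets := fun {x y} hx hy => hint x hx y hy }
  have : (⋂ i, A i) ∈ F := Filter.iInter_mem.2 hA
  exact this

theorem aux_idem {X : Type u} :
    filterClone ({Set.univ} : Set (Set X)) = {f : Ops X | ∀ x : X, f.2 (fun _ => x) = x} := by
  ext f
  simp [filterClone]

open Classical in
theorem aux_key {X : Type u} {C : Set (Ops X)} (hC : IsClone C)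
    (hI : ∀ f : Ops X, (∀ x : X, f.2 (fun _ => x) = x) → f ∈ C)
    (f g : Ops X) (hf : f ∈ C) (hfg : ∀ x, f.2 (fun _ => x) = x → g.2 (fun _ => x) = x) :
    g ∈ C := by
  obtain ⟨n, f⟩ := f
  obtain ⟨m, g⟩ := g
  simp only at hfg
  have h1 : (⟨m, fun x => f fun _ => x 0⟩ : Ops X) ∈ C :=
    hC.2 n m f hf (fun _ x => x 0) (fun _ => hC.1 m 0)
  let h : (Fin (m + 1 + 1) → X) → X := fun y =>
    if ∀ i, y i = y 0 then y 0 else g (fun i => y i.succ)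
  have hh : (⟨m + 1, h⟩ : Ops X) ∈ C := hI _ (fun x => by simp [h])
  have h2 := hC.2 (m + 1) m h hh
    (Fin.cons (fun x => f fun _ => x 0) (fun (i : Fin (m + 1)) x => x i))
    (fun i => by
      refine Fin.cases ?_ (fun i => ?_) i
      · simpa using h1
      · simpa using hC.1 m i)
  convert h2 using 2
  funext x
  simp only [h, Fin.cons_zero, Fin.cons_succ]
  split_ifs with hc
  · have hx : ∀ i : Fin (m + 1), x i = f fun _ => x 0 := fun i => by simpa using hc i.succ
    have e : x = fun _ => x 0 := by
      funext i
      rw [hx i, ← hx 0]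
    have := hfg (x 0) (hx 0).symm
    rw [← e] at this
    rw [this, ← hx 0]
  · rfl

open Classical in
theorem aux_inter {X : Type u} {C : Set (Ops X)} (hC : IsClone C)
    (hI : ∀ f : Ops X, (∀ x : X, f.2 (fun _ => x) = x) → f ∈ C)
    (f g : Ops X) (hf : f ∈ C) (hg : g ∈ C) :
    ∃ k ∈ C, ∀ x, k.2 (fun _ => x) = x → f.2 (fun _ => x) = x ∧ g.2 (fun _ => x) = x := by
  obtain ⟨n, f⟩ := f
  obtain ⟨m, g⟩ := g
  have h1 : (⟨0, fun x => f fun _ => x 0⟩ : Ops X) ∈ C :=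
    hC.2 n 0 f hf (fun _ x => x 0) (fun _ => hC.1 0 0)
  have h2 : (⟨0, fun x => g fun _ => x 0⟩ : Ops X) ∈ C :=
    hC.2 m 0 g hg (fun _ x => x 0) (fun _ => hC.1 0 0)
  let h : (Fin 3 → X) → X := fun y => if y 1 = y 0 then y 2 else y 1
  have hh : (⟨2, h⟩ : Ops X) ∈ C := hI _ (fun x => by simp [h])
  refine ⟨_, hC.2 2 0 h hh
    ![fun x => x 0, fun x => f fun _ => x 0, fun x => g fun _ => x 0] ?_, ?_⟩
  · intro i
    fin_cases i
    · exact hC.1 0 0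
    · exact h1
    · exact h2
  · intro x hx
    simp only [h] at hx
    by_cases hc : f (fun _ => x) = x
    · simp [hc] at hx
      exact ⟨hc, hx⟩
    · simp [hc] at hx

/-- **Goldstern–Shelah**: the interval of the clone lattice above the idempotent clone is
exactly the lattice of the clones `C_D`, `D` a filter. -/
theorem stmt17 {X : Type u} [Infinite X] :
    (∀ D : Set (Set X), IsFilterSet D → IsClone (filterClone D)) ∧
    (filterClone ({Set.univ} : Set (Set X)) =
      {f : Ops X | ∀ x : X, f.2 (fun _ => x) = x} ∧
      filterClone (Set.univ : Set (Set X)) = (Set.univ : Set (Ops X))) ∧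
    (∀ D₁ D₂ : Set (Set X), IsFilterSet D₁ → IsFilterSet D₂ → D₁ ⊂ D₂ →
      filterClone D₁ ⊂ filterClone D₂) ∧
    (∀ C : Set (Ops X), IsClone C → filterClone ({Set.univ} : Set (Set X)) ⊆ C →
      ∃ D : Set (Set X), IsFilterSet D ∧ C = filterClone D) := by
  refine ⟨?_, ⟨aux_idem, ?_⟩, ?_, ?_⟩
  · intro D hD
    constructor
    · intro n k
      obtain ⟨B, hB⟩ := hD.1
      exact ⟨B, hB, fun _ _ => rfl⟩
    · rintro n m f ⟨A, hA, hf⟩ g hg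
      choose B hB hg using hg
      refine ⟨A ∩ ⋂ i, B i, hD.2.2 _ hA _ (aux_iInter hD B hB), ?_⟩
      rintro x ⟨hx, hx'⟩
      have : (fun i => g i (fun _ => x)) = fun _ => x := by
        funext i
        exact hg i x (Set.mem_iInter.1 hx' i)
      change f (fun i => g i (fun _ => x)) = x
      rw [this]
      exact hf x hx
  · ext f
    simp only [Set.mem_univ, iff_true]
    exact ⟨∅, trivial, fun x hx => hx.elim⟩
  · intro D₁ D₂ h1 h2 h
    obtain ⟨hs, hn⟩ := h
    refine ⟨fun f ⟨A, hA, hf⟩ => ⟨A, hs hA, hf⟩, fun hsub => hn fun A hA => ?_⟩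
    classical
    choose o ho using fun x : X => exists_ne x
    have : unaryOp (fun x => if x ∈ A then x else o x) ∈ filterClone D₁ :=
      hsub ⟨A, hA, fun x hx => by simp [unaryOp, hx]⟩
    obtain ⟨B, hB, hf⟩ := this
    refine h1.2.1 B hB A fun x hx => ?_
    by_contra hxA
    have := hf x hx
    simp [unaryOp, hxA, ho] at this
  · intro C hC hsub
    rw [aux_idem] at hsub
    have hI : ∀ f : Ops X, (∀ x : X, f.2 (fun _ => x) = x) → f ∈ C := fun f hf => hsub hf
    refine ⟨{A | ∃ f ∈ C, ∀ x, f.2 (fun _ => x) = x → x ∈ A}, ⟨?_, ?_, ?_⟩, ?_⟩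
    · exact ⟨Set.univ, _, hC.1 0 0, fun _ _ => trivial⟩
    · rintro A ⟨f, hf, h⟩ B hAB
      exact ⟨f, hf, fun x hx => hAB (h x hx)⟩
    · rintro A ⟨f, hf, h⟩ B ⟨g, hg, h'⟩
      obtain ⟨k, hk, hk'⟩ := aux_inter hC hI f g hf hg
      exact ⟨k, hk, fun x hx => ⟨h x (hk' x hx).1, h' x (hk' x hx).2⟩⟩
    · ext g
      constructor
      · intro hg
        exact ⟨{x | g.2 (fun _ => x) = x}, ⟨g, hg, fun x hx => hx⟩, fun x hx => hx⟩
      · rintro ⟨A, ⟨f, hf, h⟩, hg⟩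
        exact aux_key hC hI f g hf fun x hx => hg x (h x hx)
end

section
/- Let X be an infinite set and let C be a clone on X containing the discriminator function d, such that B(C) = {ν(f) : f ∈ C} is a Boolean subalgebra of the power set of X. Then for every ultrafilter U on the Boolean algebra B(C), the set C_U = {f ∈ C : ν(f) ∈ U} is a clone that is a coatom of the interval [J, C]: C_U ⊊ C, and every clone D with C_U ⊊ D ⊆ C satisfies D = C. -/
universe u v

open Cardinal

/-- `ν(f)` is the set of points where `f` is idempotent. -/
def nuSet {X : Type u} (f : Ops X) : Set X := {x : X | f.2 (fun _ => x) = x}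

open Classical in
/-- The ternary discriminator operation. -/
noncomputable def discriminator (X : Type u) : Ops X :=
  ⟨2, fun x => if x 0 = x 1 then x 0 else x 2⟩

open Classical in
theorem disc_comp {X : Type u} {C : Set (Ops X)} (hC : IsClone C) (hd : discriminator X ∈ C)
    {n : ℕ} {a b c : (Fin (n + 1) → X) → X} (ha : (⟨n, a⟩ : Ops X) ∈ C)
    (hb : (⟨n, b⟩ : Ops X) ∈ C) (hc : (⟨n, c⟩ : Ops X) ∈ C) :
    (⟨n, fun x => if a x = b x then a x else c x⟩ : Ops X) ∈ C := by
  have := hC.2 2 n _ hd ![a, b, c] (by intro i; fin_cases i <;> assumption)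
  simpa using this

/-- **Marchenkov**: if `C` is a clone containing the discriminator whose set
`B(C) = {ν(f) : f ∈ C}` is a Boolean subalgebra of the power set of `X`, then every
ultrafilter `U` on `B(C)` induces a clone `C_U = {f ∈ C : ν(f) ∈ U}` which is a coatom
of the interval `[J, C]`. -/
theorem stmt18 {X : Type u} [Infinite X] (C : Set (Ops X)) (hC : IsClone C)
    (hd : discriminator X ∈ C)
    -- `B(C)` is a Boolean subalgebra of the power set of `X`:
    (hempty : ∅ ∈ {A : Set X | ∃ f ∈ C, nuSet f = A})
    (huniv : Set.univ ∈ {A : Set X | ∃ f ∈ C, nuSet f = A})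
    (hcap : ∀ A B : Set X, A ∈ {A : Set X | ∃ f ∈ C, nuSet f = A} →
      B ∈ {A : Set X | ∃ f ∈ C, nuSet f = A} → A ∩ B ∈ {A : Set X | ∃ f ∈ C, nuSet f = A})
    (hcup : ∀ A B : Set X, A ∈ {A : Set X | ∃ f ∈ C, nuSet f = A} →
      B ∈ {A : Set X | ∃ f ∈ C, nuSet f = A} → A ∪ B ∈ {A : Set X | ∃ f ∈ C, nuSet f = A})
    (hcompl : ∀ A : Set X, A ∈ {A : Set X | ∃ f ∈ C, nuSet f = A} →
      Aᶜ ∈ {A : Set X | ∃ f ∈ C, nuSet f = A})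
    -- `U` is an ultrafilter on the Boolean algebra `B(C)`:
    (U : Set (Set X)) (hUsub : U ⊆ {A : Set X | ∃ f ∈ C, nuSet f = A})
    (hUup : ∀ A ∈ U, ∀ B ∈ {A : Set X | ∃ f ∈ C, nuSet f = A}, A ⊆ B → B ∈ U)
    (hUcap : ∀ A ∈ U, ∀ B ∈ U, A ∩ B ∈ U)
    (hUne : ∅ ∉ U)
    (hUult : ∀ A ∈ {A : Set X | ∃ f ∈ C, nuSet f = A},
      (A ∈ U ∧ Aᶜ ∉ U) ∨ (A ∉ U ∧ Aᶜ ∈ U)) :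
    IsClone {f ∈ C | nuSet f ∈ U} ∧
    {f ∈ C | nuSet f ∈ U} ⊂ C ∧
    ∀ D : Set (Ops X), IsClone D → {f ∈ C | nuSet f ∈ U} ⊂ D → D ⊆ C → D = C := by
  classical
  have hclone : IsClone {f ∈ C | nuSet f ∈ U} := by
    have hU1 : (Set.univ : Set X) ∈ U := by
      rcases hUult _ huniv with h | h
      · exact h.1
      · exact absurd (by simpa using h.2) hUne
    refine ⟨fun n k => ⟨hC.1 n k, ?_⟩, ?_⟩
    · have : nuSet (⟨n, fun x => x k⟩ : Ops X) = Set.univ := by ext; simp [nuSet]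
      rw [this]; exact hU1
    · intro n m f hf g hg
      have hmem := hC.2 n m f hf.1 g (fun i => (hg i).1)
      refine ⟨hmem, ?_⟩
      have hfin : ∀ s : Finset (Fin (n + 1)),
          (⋂ i ∈ s, nuSet (⟨m, g i⟩ : Ops X)) ∈ U := by
        intro s
        induction s using Finset.induction_on with
        | empty => simpa using hU1
        | insert a s _ ih =>
          rw [Finset.set_biInter_insert]
          exact hUcap _ (hg a).2 _ ih
      refine hUup _ (hUcap _ hf.2 _ (hfin Finset.univ)) _ ⟨_, hmem, rfl⟩ ?_
      rintro x ⟨hx1, hx2⟩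
      simp only [Set.mem_iInter, Finset.mem_univ, true_implies] at hx2
      change f (fun i => g i fun _ => x) = x
      have : (fun i => g i fun _ => x) = fun _ => x := funext fun i => hx2 i
      rw [this]; exact hx1
  refine ⟨hclone, ⟨fun f hf => hf.1, fun h => ?_⟩, ?_⟩
  · obtain ⟨f, hf, he⟩ := hempty
    have := (h hf).2
    rw [he] at this
    exact hUne this
  · intro D hD hCD hDC
    refine Set.Subset.antisymm hDC ?_
    obtain ⟨⟨m, f⟩, hfD, hfn⟩ := Set.exists_of_ssubset hCD
    have hfC := hDC hfD
    have hfU : nuSet (⟨m, f⟩ : Ops X) ∉ U := fun h => hfn ⟨hfC, h⟩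
    have hAc : (nuSet (⟨m, f⟩ : Ops X))ᶜ ∈ U := by
      rcases hUult _ ⟨_, hfC, rfl⟩ with h | h
      · exact absurd h.1 hfU
      · exact h.2
    obtain ⟨⟨k, p⟩, hpC, hp⟩ := hcompl _ ⟨_, hfC, rfl⟩
    have hp' : ∀ x, p (fun _ => x) = x ↔ ¬ f (fun _ => x) = x := fun x =>
      Set.ext_iff.1 hp x
    rintro ⟨n, g⟩ hg
    -- ingredients of arity n + 2
    have hX : (⟨n + 1, fun x => x 0⟩ : Ops X) ∈ C := hC.1 _ _
    have hY : (⟨n + 1, fun x => x (Fin.last (n + 1))⟩ : Ops X) ∈ C := hC.1 _ _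
    have hG : (⟨n + 1, fun x => g fun i => x i.castSucc⟩ : Ops X) ∈ C :=
      hC.2 n (n + 1) g hg (fun i x => x i.castSucc) (fun i => hC.1 _ _)
    have hP : (⟨n + 1, fun x => p fun _ => x 0⟩ : Ops X) ∈ C :=
      hC.2 k (n + 1) p hpC (fun _ x => x 0) (fun _ => hC.1 _ _)
    have hh := disc_comp hC hd hG (disc_comp hC hd hX hP hG) (disc_comp hC hd hX hY hG)
    have hhU := hCD.1 (show _ ∈ {f ∈ C | nuSet f ∈ U} from ⟨hh, by
      refine hUup _ hAc _ ⟨_, hh, rfl⟩ ?_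
      intro x hx
      have hx' := (hp' x).2 hx
      simp only [nuSet, Set.mem_ofPred_eq, hx', if_true]
      split_ifs with h
      · exact h
      · rfl⟩)
    have hF : (⟨n, fun x => f fun _ => x 0⟩ : Ops X) ∈ D :=
      hD.2 m n f hfD (fun _ x => x 0) (fun _ => hD.1 _ _)
    have key := hD.2 (n + 1) n _ hhU
      (Fin.lastCases (fun x => f fun _ => x 0) (fun i x => x i)) (by
        intro i
        refine Fin.lastCases ?_ (fun j => ?_) i
        · simpa using hF
        · simpa using hD.1 n j)
    convert key using 2
    funext x
    have h0 : (Fin.lastCases (motive := fun _ => (Fin (n + 1) → X) → X)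
        (fun x => f fun _ => x 0) (fun i x => x i) (0 : Fin (n + 2))) x = x 0 := by
      have := Fin.lastCases_castSucc (motive := fun _ => (Fin (n + 1) → X) → X)
        (last := fun x => f fun _ => x 0) (cast := fun i x => x i) (i := (0 : Fin (n + 1)))
      exact congrFun this x
    simp only [h0, Fin.lastCases_castSucc, Fin.lastCases_last]
    by_cases hx : f (fun _ => x 0) = x 0
    · have hpx : ¬ x 0 = p (fun _ => x 0) := fun h => (hp' (x 0)).1 h.symm hx
      simp [hpx]
    · have hx2 : ¬ x 0 = f (fun _ => x 0) := fun h => hx h.symm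
      simp [hx2]
end

section
/- Let X be a set of regular infinite cardinality. The precomplete submonoids of O^(1) containing all permutations of X are exactly the monoid A and the monoids G_λ and M_λ for λ = 1 and for cardinals λ with ℵ0 ≤ λ ≤ |X|, where A = {f ∈ O^(1) : |f⁻¹[{y}]| < |X| for all but fewer than |X| many y ∈ X}, G_λ = {f ∈ O^(1) : |X ∖ f[X ∖ A]| ≥ λ for all A ⊆ X with |A| = λ}, and M_λ = {f ∈ O^(1) : |X ∖ f[X]| < λ, or the restriction of f to X ∖ A is not injective for any A ⊆ X with |A| < λ}. -/
universe u v

open Cardinal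

/-- A set of unary maps forming a submonoid of the full transformation monoid. -/
def IsTransfSubmonoid {X : Type u} (M : Set (X → X)) : Prop :=
  id ∈ M ∧ ∀ f ∈ M, ∀ g ∈ M, f ∘ g ∈ M

/-- The submonoid of the full transformation monoid generated by a set of unary maps. -/
def monGen {X : Type u} (F : Set (X → X)) : Set (X → X) :=
  ⋂₀ {M : Set (X → X) | IsTransfSubmonoid M ∧ F ⊆ M}

/-- A precomplete (maximal) submonoid of the full transformation monoid `O⁽¹⁾`. -/
def IsPrecompleteSubmonoid {X : Type u} (M : Set (X → X)) : Prop :=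
  IsTransfSubmonoid M ∧ M ≠ Set.univ ∧
    ∀ f : X → X, f ∉ M → monGen (insert f M) = Set.univ

def monA (X : Type u) : Set (X → X) :=
  {f | #{y : X | ¬ #(f ⁻¹' {y}) < #X} < #X}

def monG (X : Type u) (lam : Cardinal.{u}) : Set (X → X) :=
  {f | ∀ A : Set X, #A = lam → lam ≤ #((f '' Aᶜ)ᶜ : Set X)}

def monM (X : Type u) (lam : Cardinal.{u}) : Set (X → X) :=
  {f | #((Set.range f)ᶜ : Set X) < lam ∨
    ∀ A : Set X, #A < lam → ¬ Set.InjOn f Aᶜ}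


theorem aux_perm {X : Type u} (S T : Set X) (h : #S = #T) (h' : #(Sᶜ : Set X) = #(Tᶜ : Set X)) :
    ∃ γ : Equiv.Perm X, ∀ x, x ∈ S ↔ γ x ∈ T := by
  obtain ⟨e⟩ := Cardinal.eq.1 h
  obtain ⟨e'⟩ := Cardinal.eq.1 h'
  classical
  let f : S ↪ X := ⟨fun x => (e x : X), fun a b hab => e.injective (Subtype.ext hab)⟩
  have hr : Set.range f = T := by
    ext y
    constructor
    · rintro ⟨x, rfl⟩; exact (e x).2
    · intro hy; exact ⟨e.symm ⟨y, hy⟩, by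
        show ((e (e.symm ⟨y, hy⟩) : T) : X) = y
        rw [Equiv.apply_symm_apply]⟩
  obtain ⟨g, hg⟩ := Cardinal.extend_function f (by rw [hr]; exact ⟨e'⟩)
  refine ⟨g, fun x => ⟨fun hx => ?_, fun hx => ?_⟩⟩
  · have := hg ⟨x, hx⟩
    rw [this]; exact (e _).2
  · rw [← hr] at hx
    obtain ⟨z, hz⟩ := hx
    rw [← hg z] at hz
    rw [← g.injective hz]; exact z.2

theorem aux_fin {X : Type u} (B : Set X) (b : X) (hb : b ∈ B) (hfin : #B < ℵ₀) :
    #(B \ {b} : Set X) < #B := by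
  have h1 : #B = #(B \ {b} : Set X) + 1 := by
    rw [← Cardinal.mk_insert (show b ∉ B \ {b} by simp), Set.insert_diff_singleton, Set.insert_eq_of_mem hb]
  have h2 : #(B \ {b} : Set X) < ℵ₀ := (mk_le_mk_of_subset Set.diff_subset).trans_lt hfin
  obtain ⟨n, hn⟩ := Cardinal.lt_aleph0.1 h2
  rw [h1, hn]
  exact_mod_cast Nat.lt_succ_self n

theorem aux_step1 {X : Type u} (hX : ℵ₀ ≤ #X) (M : Set (X → X)) (hM : IsTransfSubmonoid M)
    (hS : ∀ γ : Equiv.Perm X, ⇑γ ∈ M)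
    (hm : ∀ lam : Cardinal.{u}, (lam = 1 ∨ (ℵ₀ ≤ lam ∧ lam ≤ #X)) → ¬ M ⊆ monM X lam) :
    ∀ (ν : Cardinal.{u}) (m : X → X) (B : Set X), m ∈ M → #B = ν → ν < #X →
      Set.InjOn m Bᶜ → #X ≤ #((Set.range m)ᶜ : Set X) →
      ∃ i ∈ M, Function.Injective i ∧ #((Set.range i)ᶜ : Set X) = #X := by
  haveI : Infinite X := Cardinal.infinite_iff.2 hX
  intro ν
  induction ν using WellFoundedLT.induction with
  | ind ν ih =>
  intro m B hmM hB hν hinj hr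
  have get : ∀ lam : Cardinal.{u}, (lam = 1 ∨ (ℵ₀ ≤ lam ∧ lam ≤ #X)) →
      ∃ m' ∈ M, lam ≤ #((Set.range m')ᶜ : Set X) ∧ ∃ A : Set X, #A < lam ∧ Set.InjOn m' Aᶜ := by
    intro lam hl
    obtain ⟨m', h1, h2⟩ := Set.not_subset.1 (hm lam hl)
    refine ⟨m', h1, ?_⟩
    simpa [monM] using h2
  rcases eq_or_ne ν 0 with h0 | h0
  · subst h0
    rw [Cardinal.mk_set_eq_zero_iff] at hB
    subst hB
    refine ⟨m, hmM, ?_, le_antisymm (mk_set_le _) hr⟩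
    exact Set.injOn_univ.1 (by simpa using hinj)
  rcases le_or_gt ℵ₀ ν with hinf | hfin
  · obtain ⟨m', hm', hc, A, hA, hAi⟩ := get ν (Or.inr ⟨hinf, hν.le⟩)
    obtain ⟨C, hC, hCν⟩ := le_mk_iff_exists_subset.1 hc
    obtain ⟨γ, hγ⟩ := aux_perm C B (hCν.trans hB.symm)
      (mk_compl_eq_mk_compl_infinite (hCν ▸ hν) (hB ▸ hν))
    refine ih _ hA (m ∘ (γ ∘ m')) A (hM.2 _ hmM _ (hM.2 _ (hS γ) _ hm')) rfl (hA.trans hν) ?_ ?_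
    · intro x hx y hy hxy
      have hout : ∀ x, γ (m' x) ∈ Bᶜ := fun x h => hC ((hγ _).2 h) ⟨x, rfl⟩
      exact hAi hx hy (γ.injective (hinj (hout x) (hout y) hxy))
    · exact hr.trans (mk_le_mk_of_subset (Set.compl_subset_compl.2 (Set.range_comp_subset_range _ _)))
  · obtain ⟨m', hm', hc, A, hA, hAi⟩ := get 1 (Or.inl rfl)
    have hA0 : A = ∅ := by
      rw [← Cardinal.mk_set_eq_zero_iff]; exact Cardinal.lt_one_iff_zero.1 hA
    subst hA0
    have hi : Function.Injective m' := by
      exact Set.injOn_univ.1 (by simpa using hAi)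
    obtain ⟨c, hc⟩ : ((Set.range m')ᶜ).Nonempty := by
      rw [Set.nonempty_iff_ne_empty]
      intro h; rw [h] at hc; simp at hc
    obtain ⟨b, hb⟩ : B.Nonempty := by
      rw [Set.nonempty_iff_ne_empty]
      rintro rfl; simp at hB; exact h0 hB.symm
    classical
    let γ := Equiv.swap c b
    have hgi : Function.Injective (γ ∘ m') := γ.injective.comp hi
    have hlt : #((γ ∘ m') ⁻¹' B) < ν := by
      have : (γ ∘ m') ⁻¹' B ⊆ (γ ∘ m') ⁻¹' (B \ {b}) := by
        intro x hx
        refine ⟨hx, fun h => hc ⟨x, ?_⟩⟩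
        have h : γ (m' x) = γ c := by simpa [γ] using h
        exact γ.injective h
      refine ((mk_le_mk_of_subset this).trans (mk_preimage_of_injective _ _ hgi)).trans_lt ?_
      rw [← hB]
      exact aux_fin B b hb (hB ▸ hfin)
    refine ih _ hlt (m ∘ (γ ∘ m')) _ (hM.2 _ hmM _ (hM.2 _ (hS γ) _ hm')) rfl (hlt.trans hν) ?_ ?_
    · intro x hx y hy hxy
      exact hgi (hinj hx hy hxy)
    · exact hr.trans (mk_le_mk_of_subset (Set.compl_subset_compl.2 (Set.range_comp_subset_range _ _)))

theorem aux_fiber {X : Type u} (f p : X → X) (d : X) (c : Cardinal.{u})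
    (h : c ≤ #(p ⁻¹' {d})) : c ≤ #((f ∘ p) ⁻¹' {f d}) := by
  refine h.trans (mk_le_mk_of_subset ?_)
  intro x hx
  have : p x = d := hx
  simp [this]

theorem aux_step2 {X : Type u} (hX : ℵ₀ ≤ #X) (M : Set (X → X)) (hM : IsTransfSubmonoid M)
    (hS : ∀ γ : Equiv.Perm X, ⇑γ ∈ M)
    (hm : ∀ lam : Cardinal.{u}, (lam = 1 ∨ (ℵ₀ ≤ lam ∧ lam ≤ #X)) → ¬ M ⊆ monG X lam) :
    ∀ (ν : Cardinal.{u}) (p : X → X) (D : Set X), p ∈ M → #(Dᶜ : Set X) = ν → #D = #X →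
      (∀ y ∈ D, #X ≤ #(p ⁻¹' {y})) →
      ∃ q ∈ M, ∀ y, #X ≤ #(q ⁻¹' {y}) := by
  haveI : Infinite X := Cardinal.infinite_iff.2 hX
  intro ν
  induction ν using WellFoundedLT.induction with
  | ind ν ih =>
  intro p D hpM hD hDX hfib
  have hνX : ν ≤ #X := hD ▸ mk_set_le _
  have get : ∀ lam : Cardinal.{u}, (lam = 1 ∨ (ℵ₀ ≤ lam ∧ lam ≤ #X)) →
      ∃ g ∈ M, ∃ A : Set X, #A = lam ∧ #((g '' Aᶜ)ᶜ : Set X) < lam := by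
    intro lam hl
    obtain ⟨m', h1, h2⟩ := Set.not_subset.1 (hm lam hl)
    refine ⟨m', h1, ?_⟩
    simpa [monG] using h2
  have big : ∀ s : Set X, #(sᶜ : Set X) < #X → #s = #X := by
    intro s hs
    have := mk_compl_of_infinite _ hs
    rwa [compl_compl] at this
  rcases eq_or_ne ν 0 with h0 | h0
  · subst h0
    rw [Cardinal.mk_set_eq_zero_iff] at hD
    rw [Set.compl_empty_iff] at hD
    subst hD
    exact ⟨p, hpM, fun y => hfib y trivial⟩
  rcases le_or_gt ℵ₀ ν with hinf | hfin
  · obtain ⟨g, hg, A, hA, hAg⟩ := get ν (Or.inr ⟨hinf, hνX⟩)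
    have hAc : #(Aᶜ : Set X) = #X := by
      refine le_antisymm (mk_set_le _) ?_
      rw [← big _ (hAg.trans_le hνX)]
      exact mk_image_le
    obtain ⟨γ, hγ⟩ := aux_perm D Aᶜ (hDX.trans hAc.symm) (by rw [compl_compl, hD, hA])
    refine ih _ hAg (g ∘ (γ ∘ p)) (g '' Aᶜ) (hM.2 _ hg _ (hM.2 _ (hS γ) _ hpM)) rfl
      (big _ (hAg.trans_le hνX)) ?_
    rintro _ ⟨a, ha, rfl⟩
    apply aux_fiber
    obtain ⟨d, rfl⟩ := γ.surjective a
    exact aux_fiber _ _ _ _ (hfib d ((hγ d).2 ha))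
  · obtain ⟨g, hg, A, hA, hAg⟩ := get 1 (Or.inl rfl)
    obtain ⟨a, rfl⟩ := Cardinal.mk_set_eq_one_iff.1 hA
    have hsurj : ∀ y, ∃ x, x ≠ a ∧ g x = y := by
      have : (g '' {a}ᶜ)ᶜ = ∅ := by
        rw [← Cardinal.mk_set_eq_zero_iff]; exact Cardinal.lt_one_iff_zero.1 hAg
      rw [Set.compl_empty_iff] at this
      intro y
      have hy : y ∈ g '' {a}ᶜ := this ▸ trivial
      obtain ⟨x, hx, h⟩ := hy
      exact ⟨x, hx, h⟩
    obtain ⟨e, he⟩ : (Dᶜ).Nonempty := by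
      rw [Set.nonempty_iff_ne_empty]
      intro h; rw [h] at hD; simp at hD; exact h0 hD.symm
    classical
    let γ := Equiv.swap e a
    have hlt : #((((g ∘ γ) '' D)ᶜ : Set X)) < ν := by
      have : ((g ∘ γ) '' D)ᶜ ⊆ (g ∘ γ) '' (Dᶜ \ {e}) := by
        intro y hy
        obtain ⟨x, hx, rfl⟩ := hsurj y
        obtain ⟨d, rfl⟩ := γ.surjective x
        refine ⟨d, ⟨fun hd => hy ⟨d, hd, rfl⟩, ?_⟩, rfl⟩
        rintro rfl
        simp [γ] at hx
      refine ((mk_le_mk_of_subset this).trans mk_image_le).trans_lt ?_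
      rw [← hD]
      exact aux_fin _ e he (hD ▸ hfin)
    refine ih _ hlt ((g ∘ γ) ∘ p) ((g ∘ γ) '' D) (hM.2 _ (hM.2 _ hg _ (hS γ)) _ hpM) rfl
      (big _ (hlt.trans_le hνX)) ?_
    rintro _ ⟨d, hd, rfl⟩
    exact aux_fiber _ _ _ _ (hfib d hd)

theorem aux_final {X : Type u} (hX : ℵ₀ ≤ #X) (p i h : X → X) (hp : ∀ y, #X ≤ #(p ⁻¹' {y}))
    (hi : Function.Injective i) (hic : #((Set.range i)ᶜ : Set X) = #X) :
    ∃ γ : Equiv.Perm X, h = p ∘ (γ ∘ i) := by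
  have hsum : #(X ⊕ X) = #X := by simp [Cardinal.add_eq_self hX]
  obtain ⟨φ⟩ := Cardinal.eq.1 hsum
  have hp' : ∀ y, Nonempty (X ↪ (p ⁻¹' {y} : Set X)) := fun y => Cardinal.le_def _ _ |>.1 (hp y)
  let e := fun y => Classical.choice (hp' y)
  let J : X ⊕ X → X := fun z => e (h (z.elim id id)) (φ z)
  have hpJ : ∀ z, p (J z) = h (z.elim id id) := fun z => (e (h (z.elim id id)) (φ z)).2
  have hJ : Function.Injective J := by
    intro z w hzw
    have h1 : h (z.elim id id) = h (w.elim id id) := by rw [← hpJ, ← hpJ, hzw]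
    simp only [J] at hzw
    rw [h1] at hzw
    exact φ.injective ((e _).injective (Subtype.ext hzw))
  let ei := Equiv.ofInjective i hi
  let f : Set.range i ↪ X := ⟨fun y => J (Sum.inl (ei.symm y)),
    (hJ.comp Sum.inl_injective).comp ei.symm.injective⟩
  have hr : #((Set.range f)ᶜ : Set X) = #X := by
    refine le_antisymm (mk_set_le _) ?_
    rw [← mk_range_eq (fun x => J (Sum.inr x)) (hJ.comp Sum.inr_injective)]
    refine mk_le_mk_of_subset ?_
    rintro _ ⟨x, rfl⟩ ⟨y, hy⟩
    have := hJ hy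
    simp at this
  obtain ⟨γ, hγ⟩ := Cardinal.extend_function f (Cardinal.eq.1 (hic.trans hr.symm))
  refine ⟨γ, ?_⟩
  funext x
  have := hγ (ei x)
  have h2 : γ (i x) = J (Sum.inl x) := by
    simpa [f, ei] using this
  simp only [Function.comp, h2, hpJ]
  rfl

def AuxListed {X : Type u} (N : Set (X → X)) : Prop :=
  N = monA X ∨ ∃ lam : Cardinal.{u}, (lam = 1 ∨ (ℵ₀ ≤ lam ∧ lam ≤ #X)) ∧
        (N = monG X lam ∨ N = monM X lam)

theorem aux_complete {X : Type u} (hX : ℵ₀ ≤ #X) (M : Set (X → X)) (hM : IsTransfSubmonoid M)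
    (hS : ∀ γ : Equiv.Perm X, ⇑γ ∈ M) (hN : ∀ N, AuxListed N → ¬ M ⊆ N) : M = Set.univ := by
  have hGl := fun lam hl => hN (monG X lam) (Or.inr ⟨lam, hl, Or.inl rfl⟩)
  have hMl := fun lam hl => hN (monM X lam) (Or.inr ⟨lam, hl, Or.inr rfl⟩)
  obtain ⟨a, haM, ha⟩ := Set.not_subset.1 (hN (monA X) (Or.inl rfl))
  obtain ⟨m, hmM, hm⟩ := Set.not_subset.1 (hMl #X (Or.inr ⟨hX, le_rfl⟩))
  have hm : #X ≤ #((Set.range m)ᶜ : Set X) ∧ ∃ A : Set X, #A < #X ∧ Set.InjOn m Aᶜ := by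
    simpa [monM] using hm
  obtain ⟨hm1, B, hB, hBi⟩ := hm
  obtain ⟨i, hiM, hi, hic⟩ := aux_step1 hX M hM hS hMl _ m B hmM rfl hB hBi hm1
  have ha : #X ≤ #{y : X | ¬ #(a ⁻¹' {y}) < #X} := not_lt.1 ha
  obtain ⟨p, hpM, hp⟩ := aux_step2 hX M hM hS hGl _ a _ haM rfl (le_antisymm (mk_set_le _) ha)
    (fun y hy => not_lt.1 hy)
  refine Set.eq_univ_of_forall fun h => ?_
  obtain ⟨γ, rfl⟩ := aux_final hX p i h hp hi hic
  exact hM.2 _ hpM _ (hM.2 _ (hS γ) _ hiM)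

theorem aux_add_lt {a b c : Cardinal.{u}} (hc : c = 1 ∨ ℵ₀ ≤ c) (ha : a < c) (hb : b < c) :
    a + b < c := by
  rcases hc with rfl | hc
  · rw [Cardinal.lt_one_iff_zero] at *
    simp [ha, hb]
  · exact add_lt_of_lt hc ha hb

theorem aux_monA {X : Type u} (hreg : (#X).IsRegular) :
    IsTransfSubmonoid (monA X) ∧ ∀ γ : Equiv.Perm X, ⇑γ ∈ monA X := by
  have hX := hreg.aleph0_le
  have hperm : ∀ γ : Equiv.Perm X, ⇑γ ∈ monA X := by
    intro γ
    have : {y : X | ¬ #(γ ⁻¹' {y}) < #X} = ∅ := by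
      rw [Set.eq_empty_iff_forall_notMem]
      intro y hy
      apply hy
      refine (mk_preimage_of_injective γ {y} γ.injective).trans_lt ?_
      rw [mk_singleton]
      exact one_lt_aleph0.trans_le hX
    show #{y : X | ¬ #(γ ⁻¹' {y}) < #X} < #X
    rw [this, mk_emptyCollection]
    exact aleph0_pos.trans_le hX
  refine ⟨⟨hperm (Equiv.refl X), ?_⟩, hperm⟩
  intro f hf g hg
  have hf : #{y : X | ¬ #(f ⁻¹' {y}) < #X} < #X := hf
  have hg : #{y : X | ¬ #(g ⁻¹' {y}) < #X} < #X := hg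
  show #{y : X | ¬ #((f ∘ g) ⁻¹' {y}) < #X} < #X
  refine lt_of_le_of_lt ((mk_le_mk_of_subset (t := {y : X | ¬ #(f ⁻¹' {y}) < #X} ∪
    f '' {y : X | ¬ #(g ⁻¹' {y}) < #X}) ?_).trans (mk_union_le _ _))
    (add_lt_of_lt hX hf (mk_image_le.trans_lt hg))
  intro y hy
  by_contra hcon
  rw [Set.mem_union, not_or] at hcon
  obtain ⟨h1, h2⟩ := hcon
  have h1 : #(f ⁻¹' {y}) < #X := not_not.1 h1
  apply hy
  have : (f ∘ g) ⁻¹' {y} = ⋃ x, ⋃ (_ : x ∈ f ⁻¹' {y}), g ⁻¹' {x} := by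
    ext z; simp
  rw [this, card_biUnion_lt_iff_forall_of_isRegular hreg h1]
  intro x hx
  by_contra h3
  exact h2 ⟨x, h3, hx⟩

theorem aux_monG {X : Type u} (lam : Cardinal.{u}) :
    IsTransfSubmonoid (monG X lam) ∧ ∀ γ : Equiv.Perm X, ⇑γ ∈ monG X lam := by
  have hperm : ∀ γ : Equiv.Perm X, ⇑γ ∈ monG X lam := by
    intro γ A hA
    rw [Set.image_compl_eq γ.bijective, compl_compl, mk_image_eq γ.injective, hA]
  refine ⟨⟨hperm (Equiv.refl X), ?_⟩, hperm⟩
  intro f hf g hg A hA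
  obtain ⟨B, hB, hBl⟩ := le_mk_iff_exists_subset.1 (hg A hA)
  refine (hf B hBl).trans (mk_le_mk_of_subset (Set.compl_subset_compl.2 ?_))
  rintro _ ⟨x, hx, rfl⟩
  exact ⟨g x, fun h => hB h ⟨x, hx, rfl⟩, rfl⟩

theorem aux_monM {X : Type u} (lam : Cardinal.{u}) (hl : lam = 1 ∨ ℵ₀ ≤ lam) :
    IsTransfSubmonoid (monM X lam) ∧ ∀ γ : Equiv.Perm X, ⇑γ ∈ monM X lam := by
  have hpos : 0 < lam := by
    rcases hl with rfl | h
    · exact zero_lt_one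
    · exact aleph0_pos.trans_le h
  have hperm : ∀ γ : Equiv.Perm X, ⇑γ ∈ monM X lam := by
    intro γ
    left
    simpa [γ.surjective.range_eq] using hpos
  refine ⟨⟨hperm (Equiv.refl X), ?_⟩, hperm⟩
  intro f hf g hg
  by_contra hcon
  have hcon : lam ≤ #((Set.range (f ∘ g))ᶜ : Set X) ∧
      ∃ A : Set X, #A < lam ∧ Set.InjOn (f ∘ g) Aᶜ := by
    simpa [monM] using hcon
  obtain ⟨hr, A, hA, hinj⟩ := hcon
  have hgi : Set.InjOn g Aᶜ := fun x hx y hy h => hinj hx hy (congrArg f h)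
  have hgr : #((Set.range g)ᶜ : Set X) < lam := by
    rcases hg with h | h
    · exact h
    · exact absurd hgi (h A hA)
  have hfr : #((Set.range f)ᶜ : Set X) < lam := by
    rcases hf with h | h
    · exact h
    · refine absurd ?_ (h ((Set.range g)ᶜ ∪ g '' A) ((mk_union_le _ _).trans_lt
        (aux_add_lt hl hgr (mk_image_le.trans_lt hA))))
      intro x hx y hy hxy
      simp only [Set.compl_union, compl_compl] at hx hy
      obtain ⟨⟨x, rfl⟩, hx⟩ := hx
      obtain ⟨⟨y, rfl⟩, hy⟩ := hy
      rw [hinj (fun h => hx ⟨x, h, rfl⟩) (fun h => hy ⟨y, h, rfl⟩) hxy]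
  refine absurd hr (not_le.2 ?_)
  refine lt_of_le_of_lt ((mk_le_mk_of_subset (t := (Set.range f)ᶜ ∪ f '' (Set.range g)ᶜ) ?_).trans
    (mk_union_le _ _)) (aux_add_lt hl hfr (mk_image_le.trans_lt hgr))
  intro y hy
  by_cases h : y ∈ Set.range f
  · obtain ⟨x, rfl⟩ := h
    refine Or.inr ⟨x, ?_, rfl⟩
    rintro ⟨z, rfl⟩
    exact hy ⟨z, rfl⟩
  · exact Or.inl h

/-- folding `ν` many points, and a section of it. -/
structure AuxFI {X : Type u} (f i : X → X) (L : Set X) : Prop where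
  fi : ∀ x, f (i x) = x
  ran : Set.range i = Lᶜ
  inj : Set.InjOn f L

theorem aux_FI {X : Type u} (hX : ℵ₀ ≤ #X) (ν : Cardinal.{u}) (hν : ν ≤ #X) :
    ∃ (f i : X → X) (L : Set X), #L = ν ∧ AuxFI f i L := by
  obtain ⟨Λ, hΛ⟩ := Cardinal.le_mk_iff_exists_set.1 hν
  have : #X = #(X ⊕ Λ) := by
    simp [hΛ, Cardinal.add_eq_left hX hν]
  obtain ⟨e⟩ := Cardinal.eq.1 this
  refine ⟨fun x => Sum.elim id Subtype.val (e x), fun x => e.symm (Sum.inl x),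
    Set.range (fun x => e.symm (Sum.inr x)), ?_, ?_, ?_, ?_⟩
  · exact (mk_range_eq _ (e.symm.injective.comp Sum.inr_injective)).trans hΛ
  · intro x; simp
  · ext y
    obtain ⟨z, rfl⟩ := e.symm.surjective y
    rcases z with z | z <;> simp
  · rintro _ ⟨x, rfl⟩ _ ⟨y, rfl⟩ h
    have : x = y := Subtype.ext (by simpa using h)
    rw [this]

namespace AuxFI
variable {X : Type u} {f i : X → X} {L : Set X}

theorem iinj (h : AuxFI f i L) : Function.Injective i :=
  Function.LeftInverse.injective h.fi

theorem fsurj (h : AuxFI f i L) : Function.Surjective f := fun x => ⟨i x, h.fi x⟩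

theorem ifx (h : AuxFI f i L) {z : X} (hz : z ∉ L) : i (f z) = z := by
  have : z ∈ Set.range i := by rw [h.ran]; exact hz
  obtain ⟨w, rfl⟩ := this
  rw [h.fi]

theorem inotL (h : AuxFI f i L) (x : X) : i x ∉ L := by
  have : i x ∈ Set.range i := ⟨x, rfl⟩
  rwa [h.ran] at this

theorem img (h : AuxFI f i L) {A : Set X} (hA : A ⊆ L) : f '' Aᶜ = Set.univ :=
  Set.eq_univ_of_forall fun y => ⟨i y, fun hy => h.inotL y (hA hy), h.fi y⟩

theorem ranc (h : AuxFI f i L) : (Set.range i)ᶜ = L := by rw [h.ran, compl_compl]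

end AuxFI

theorem aux_inj_not_monM {X : Type u} (i : X → X) (hi : Function.Injective i) {lam : Cardinal.{u}}
    (h0 : 0 < lam) (h : lam ≤ #((Set.range i)ᶜ : Set X)) : i ∉ monM X lam := by
  rintro (h1 | h1)
  · exact absurd h1 (not_lt.2 h)
  · exact h1 ∅ (by simpa using h0) hi.injOn

theorem aux_mem_monG {X : Type u} (f : X → X) {lam : Cardinal.{u}}
    (h : lam ≤ #((Set.range f)ᶜ : Set X)) : f ∈ monG X lam := fun _ _ =>
  h.trans (mk_le_mk_of_subset (Set.compl_subset_compl.2 (Set.image_subset_range _ _)))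

theorem aux_mem_monA {X : Type u} (hX : ℵ₀ ≤ #X) (f : X → X)
    (h : ∀ y, #(f ⁻¹' {y}) < #X) : f ∈ monA X := by
  have : {y : X | ¬ #(f ⁻¹' {y}) < #X} = ∅ := by
    rw [Set.eq_empty_iff_forall_notMem]
    intro y hy
    exact hy (h y)
  show #{y : X | ¬ #(f ⁻¹' {y}) < #X} < #X
  rw [this, mk_emptyCollection]
  exact aleph0_pos.trans_le hX

theorem aux_inj_monA {X : Type u} (hX : ℵ₀ ≤ #X) (i : X → X)
    (hi : Function.Injective i) : i ∈ monA X := by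
  refine aux_mem_monA hX i fun y => ?_
  refine (mk_preimage_of_injective i {y} hi).trans_lt ?_
  rw [mk_singleton]
  exact one_lt_aleph0.trans_le hX

theorem aux_fold_monA {X : Type u} (hX : ℵ₀ ≤ #X) {f i : X → X} {L : Set X}
    (h : AuxFI f i L) : f ∈ monA X := by
  refine aux_mem_monA hX f fun y => ?_
  refine lt_of_lt_of_le ?_ hX
  rw [lt_aleph0_iff_set_finite]
  refine Set.Finite.subset (s := {i y} ∪ (L ∩ f ⁻¹' {y})) ?_ ?_
  · refine (Set.finite_singleton _).union (Set.Subsingleton.finite ?_)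
    rintro a ⟨ha, ha'⟩ b ⟨hb, hb'⟩
    exact h.inj ha hb (ha'.trans hb'.symm)
  · intro z hz
    by_cases hzL : z ∈ L
    · exact Or.inr ⟨hzL, hz⟩
    · left
      have hz : f z = y := hz
      rw [← hz, h.ifx hzL]
      rfl

theorem aux_surj_monM {X : Type u} (f : X → X) (hf : Function.Surjective f) {lam : Cardinal.{u}}
    (h0 : 0 < lam) : f ∈ monM X lam := by
  left
  simpa [hf.range_eq] using h0

theorem aux_fold_not_monG {X : Type u} {f i : X → X} {L : Set X} (h : AuxFI f i L)
    {lam : Cardinal.{u}} (h0 : 0 < lam) (hl : lam ≤ #L) : f ∉ monG X lam := by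
  intro hf
  obtain ⟨A, hA, hAl⟩ := le_mk_iff_exists_subset.1 hl
  have := hf A hAl
  rw [h.img hA] at this
  simp at this
  exact h0.ne' this

theorem aux_fold_monG {X : Type u} {f i : X → X} {L : Set X} (h : AuxFI f i L)
    {mu : Cardinal.{u}} (hm : ℵ₀ ≤ mu) (hl : #L < mu) : f ∈ monG X mu := by
  intro A hA
  by_contra hlt
  rw [not_le] at hlt
  have hsub : A ⊆ L ∪ (i '' (f '' L) ∪ i '' ((f '' Aᶜ)ᶜ)) := by
    intro z hz
    by_cases hzL : z ∈ L
    · exact Or.inl hzL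
    right
    rw [← h.ifx hzL]
    by_cases h1 : f z ∈ f '' L
    · exact Or.inl ⟨_, h1, rfl⟩
    right
    refine ⟨_, ?_, rfl⟩
    rintro ⟨w, hw, hwz⟩
    by_cases hwL : w ∈ L
    · exact h1 ⟨w, hwL, hwz⟩
    · apply hw
      rw [← h.ifx hwL, hwz, h.ifx hzL]
      exact hz
  have := mk_le_mk_of_subset hsub
  rw [hA] at this
  refine absurd this (not_le.2 ?_)
  refine (mk_union_le _ _).trans_lt (add_lt_of_lt hm hl ((mk_union_le _ _).trans_lt
    (add_lt_of_lt hm ?_ ?_)))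
  · exact (mk_image_le.trans mk_image_le).trans_lt hl
  · exact mk_image_le.trans_lt hlt

theorem aux_GG {X : Type u} (hX : ℵ₀ ≤ #X) {mu lam : Cardinal.{u}} (hl : lam ≤ #X)
    (h : mu < lam) : ¬ monG X mu ⊆ monG X lam := by
  obtain ⟨f, j, K, hK, hf⟩ := aux_FI hX #X le_rfl
  obtain ⟨g, i, L, hL, hi⟩ := aux_FI hX mu (h.le.trans hl)
  intro hsub
  have hmem : i ∘ f ∈ monG X mu := by
    apply aux_mem_monG
    rw [hf.fsurj.range_comp, hi.ranc, hL]
  obtain ⟨A, hA, hAl⟩ := le_mk_iff_exists_subset.1 (hl.trans hK.ge)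
  have := hsub hmem A hAl
  rw [Set.image_comp, hf.img hA, Set.image_univ, hi.ranc, hL] at this
  exact absurd this (not_le.2 h)

theorem aux_MM {X : Type u} (hX : ℵ₀ ≤ #X) {mu lam : Cardinal.{u}} (hl : lam ≤ #X)
    (h : mu < lam) : ¬ monM X mu ⊆ monM X lam := by
  obtain ⟨g, i, K, hK, hi⟩ := aux_FI hX #X le_rfl
  obtain ⟨f, j, L, hL, hf⟩ := aux_FI hX mu (h.le.trans hl)
  intro hsub
  have hmem : i ∘ f ∈ monM X mu := by
    right
    intro A hA hinj
    have hfi : Set.InjOn f Aᶜ := fun x hx y hy hxy => hinj hx hy (congrArg i hxy)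
    have key : ∀ l ∈ L, l ∉ A → j (f l) ∈ A := by
      intro l hl hlA
      by_contra hc
      have := hfi hlA hc (hf.fi (f l)).symm
      exact hf.inotL (f l) (this ▸ hl)
    refine absurd hA (not_lt.2 ?_)
    rw [← hL]
    classical
    refine Cardinal.mk_le_of_injective (f := fun l : L =>
      if hlA : (l : X) ∈ A then (⟨l, hlA⟩ : A) else ⟨j (f l), key l l.2 hlA⟩) ?_
    rintro ⟨l, hl⟩ ⟨l', hl'⟩ hll
    dsimp only at hll
    have hnl := hf.inotL
    split_ifs at hll with h1 h2 h2
    · simpa using hll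
    · have : l = j (f l') := congrArg Subtype.val hll
      exact absurd (this ▸ hl) (hnl _)
    · have : j (f l) = l' := congrArg Subtype.val hll
      exact absurd (this ▸ hl') (hnl _)
    · have : j (f l) = j (f l') := congrArg Subtype.val hll
      exact Subtype.ext (hf.inj hl hl' (hf.iinj this))
  rcases hsub hmem with h1 | h1
  · rw [hf.fsurj.range_comp, hi.ranc, hK] at h1
    exact absurd h1 (not_lt.2 hl)
  · refine h1 L (hL ▸ h) ?_
    intro x hx y hy hxy
    have := hi.iinj hxy
    rw [← hf.ifx hx, this, hf.ifx hy]

theorem aux_wA {X : Type u} (hX : ℵ₀ ≤ #X) : ∃ w : X → X, w ∉ monA X ∧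
    ∀ lam ≤ #X, w ∈ monG X lam ∧ w ∈ monM X lam := by
  obtain ⟨g, i, K, hK, hi⟩ := aux_FI hX #X le_rfl
  have : #X = #(X × X) := by simp [Cardinal.mul_eq_self hX]
  obtain ⟨e⟩ := Cardinal.eq.1 this
  have hfib : ∀ y, Function.Injective (fun x => e.symm (y, x)) := fun y a b h => by
    simpa using h
  refine ⟨fun x => i (e x).1, ?_, fun lam hl => ⟨?_, ?_⟩⟩
  · intro hw
    have hw : #{y : X | ¬ #((fun x => i (e x).1) ⁻¹' {y}) < #X} < #X := hw
    refine absurd hw (not_lt.2 ?_)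
    conv_lhs => rw [← mk_range_eq i hi.iinj]
    refine mk_le_mk_of_subset ?_
    rintro _ ⟨y, rfl⟩
    show ¬ _
    rw [not_lt]
    conv_lhs => rw [← mk_range_eq _ (hfib y)]
    refine mk_le_mk_of_subset ?_
    rintro _ ⟨x, rfl⟩
    simp
  · apply aux_mem_monG
    refine hl.trans ?_
    rw [← hK, ← hi.ranc]
    refine mk_le_mk_of_subset (Set.compl_subset_compl.2 ?_)
    rintro _ ⟨x, rfl⟩
    exact ⟨_, rfl⟩
  · right
    intro A hA hinj
    haveI : Infinite X := Cardinal.infinite_iff.2 hX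
    obtain ⟨y⟩ : Nonempty X := inferInstance
    let B : Set X := (fun x => e.symm (y, x)) ⁻¹' A
    have hB : #B < #X := (mk_preimage_of_injective _ A (hfib y)).trans_lt (hA.trans_le hl)
    have hBc := mk_compl_of_infinite B hB
    have : (Bᶜ).Subsingleton := by
      intro a ha b hb
      exact hfib y (hinj ha hb (by simp))
    have h1 : #(Bᶜ : Set X) ≤ 1 := Cardinal.mk_le_one_iff_set_subsingleton.2 this
    rw [hBc] at h1
    exact absurd (hX.trans h1) (not_le.2 one_lt_aleph0)

theorem aux_antichain {X : Type u} (hX : ℵ₀ ≤ #X) (N N' : Set (X → X)) (hN : AuxListed N)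
    (hN' : AuxListed N') (hsub : N ⊆ N') : N = N' := by
  have hle : ∀ lam : Cardinal.{u}, (lam = 1 ∨ (ℵ₀ ≤ lam ∧ lam ≤ #X)) →
      0 < lam ∧ lam ≤ #X := by
    rintro lam (rfl | ⟨h1, h2⟩)
    · exact ⟨zero_lt_one, one_lt_aleph0.le.trans hX⟩
    · exact ⟨aleph0_pos.trans_le h1, h2⟩
  have hinf : ∀ lam mu : Cardinal.{u}, (lam = 1 ∨ (ℵ₀ ≤ lam ∧ lam ≤ #X)) →
      (mu = 1 ∨ (ℵ₀ ≤ mu ∧ mu ≤ #X)) → lam < mu → ℵ₀ ≤ mu := by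
    rintro lam mu hl (rfl | h) hlt
    · exact absurd (Cardinal.lt_one_iff_zero.1 hlt) (hle lam hl).1.ne'
    · exact h.1
  obtain ⟨f, i, K, hK, hf⟩ := aux_FI hX #X le_rfl
  rcases hN' with rfl | ⟨lam, hl, rfl | rfl⟩
  · obtain ⟨w, hw, hw'⟩ := aux_wA hX
    rcases hN with rfl | ⟨mu, hm, rfl | rfl⟩
    · rfl
    · exact absurd (hsub (hw' mu (hle mu hm).2).1) hw
    · exact absurd (hsub (hw' mu (hle mu hm).2).2) hw
  · have hnot := aux_fold_not_monG hf (hle lam hl).1 (hK ▸ (hle lam hl).2)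
    rcases hN with rfl | ⟨mu, hm, rfl | rfl⟩
    · exact absurd (hsub (aux_fold_monA hX hf)) hnot
    · rcases lt_trichotomy mu lam with h | rfl | h
      · exact absurd hsub (aux_GG hX (hle lam hl).2 h)
      · rfl
      · obtain ⟨f', i', L, hL, hf'⟩ := aux_FI hX lam (hle lam hl).2
        exact absurd (hsub (aux_fold_monG hf' (hinf lam mu hl hm h) (hL ▸ h)))
          (aux_fold_not_monG hf' (hle lam hl).1 hL.ge)
    · exact absurd (hsub (aux_surj_monM f hf.fsurj (hle mu hm).1)) hnot
  · have hnot : i ∉ monM X lam := aux_inj_not_monM i hf.iinj (hle lam hl).1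
      (by rw [hf.ranc, hK]; exact (hle lam hl).2)
    rcases hN with rfl | ⟨mu, hm, rfl | rfl⟩
    · exact absurd (hsub (aux_inj_monA hX i hf.iinj)) hnot
    · exact absurd (hsub (aux_mem_monG i (by rw [hf.ranc, hK]; exact (hle mu hm).2))) hnot
    · rcases lt_trichotomy mu lam with h | rfl | h
      · exact absurd hsub (aux_MM hX (hle lam hl).2 h)
      · rfl
      · obtain ⟨f', i', L, hL, hf'⟩ := aux_FI hX lam (hle lam hl).2
        refine absurd (hsub (Or.inl ?_)) (aux_inj_not_monM i' hf'.iinj (hle lam hl).1 ?_)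
        · rw [hf'.ranc, hL]; exact h
        · rw [hf'.ranc, hL]

theorem aux_listed {X : Type u} (hreg : (#X).IsRegular) (N : Set (X → X)) (hN : AuxListed N) :
    IsTransfSubmonoid N ∧ (∀ γ : Equiv.Perm X, ⇑γ ∈ N) ∧ N ≠ Set.univ := by
  have hX := hreg.aleph0_le
  have hne : N ≠ Set.univ := by
    rintro rfl
    have h1 := aux_antichain hX
    have hA : (Set.univ : Set (X → X)) = monA X := by
      refine (aux_antichain hX _ _ (Or.inl rfl) hN (Set.subset_univ _)).symm
    obtain ⟨w, hw, -⟩ := aux_wA hX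
    exact hw (hA ▸ trivial)
  rcases hN with rfl | ⟨lam, hl, rfl | rfl⟩
  · exact ⟨(aux_monA hreg).1, (aux_monA hreg).2, hne⟩
  · exact ⟨(aux_monG lam).1, (aux_monG lam).2, hne⟩
  · have := aux_monM (X := X) lam (hl.imp_right And.left)
    exact ⟨this.1, this.2, hne⟩

theorem aux_gen {X : Type u} (F : Set (X → X)) : IsTransfSubmonoid (monGen F) ∧ F ⊆ monGen F := by
  refine ⟨⟨fun M hM => hM.1.1, fun f hf g hg M hM => hM.1.2 f (hf M hM) g (hg M hM)⟩,
    fun f hf M hM => hM.2 hf⟩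

/-- **Gavrilov; Pinsker**: on a set of regular infinite cardinality, the precomplete
submonoids of `O⁽¹⁾` containing all permutations are exactly `A`, and `G_λ`, `M_λ` for
`λ = 1` and for infinite cardinals `λ ≤ |X|`. -/
theorem stmt19 {X : Type u} (hreg : (#X).IsRegular) (M : Set (X → X)) :
    (IsTransfSubmonoid M ∧ (∀ γ : Equiv.Perm X, ⇑γ ∈ M) ∧ IsPrecompleteSubmonoid M) ↔
    (M = monA X ∨
      ∃ lam : Cardinal.{u}, (lam = 1 ∨ (ℵ₀ ≤ lam ∧ lam ≤ #X)) ∧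
        (M = monG X lam ∨ M = monM X lam)) := by
  have hX := hreg.aleph0_le
  show _ ↔ AuxListed M
  constructor
  · rintro ⟨hM, hS, -, hne, hmax⟩
    by_contra hcon
    apply hne
    refine aux_complete hX M hM hS ?_
    intro N hN hsub
    obtain ⟨hN1, hN2, hN3⟩ := aux_listed hreg N hN
    have hex : ∃ f ∈ N, f ∉ M := by
      by_contra hc
      push Not at hc
      have : M = N := Set.Subset.antisymm hsub hc
      exact hcon (this ▸ hN)
    obtain ⟨f, hfN, hfM⟩ := hex
    have hu := hmax f hfM
    apply hN3
    refine Set.eq_univ_of_univ_subset ?_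
    rw [← hu]
    exact Set.sInter_subset_of_mem ⟨hN1, Set.insert_subset hfN hsub⟩
  · intro hM
    obtain ⟨h1, h2, h3⟩ := aux_listed hreg M hM
    refine ⟨h1, h2, h1, h3, ?_⟩
    intro f hf
    have hg := aux_gen (insert f M)
    have hMg : M ⊆ monGen (insert f M) := (Set.subset_insert f M).trans hg.2
    refine aux_complete hX _ hg.1 (fun γ => hMg (h2 γ)) ?_
    intro N hN hsub
    have := aux_antichain hX M N hM hN (hMg.trans hsub)
    subst this
    exact hf (hsub (hg.2 (Set.mem_insert f M)))
end
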